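/- arXiv:1711.08703 — 3 statements merged into one kernel-verified Lean document; each statement's English description precedes it below -/
import Mathlib

section
/- Let H be a separable infinite-dimensional complex Hilbert space and let U(H) be its unitary group with the strong operator topology. For every positive integer n, the map f_n : U(H) → U(H) defined by f_n(u) = uⁿ is category preserving, i.e., the preimage under f_n of every comeager subset of U(H) is comeager. -/
open MeasureTheory Topology

/-- The unitary group `U(H)` of a complex Hilbert space `H`, to be equipped with the strong
operator topology. -/
def UnitarySOT (H : Type*) [NormedAddCommGroup H] [InnerProductSpace ℂ H]
    [CompleteSpace H] : Type _ :=
  unitary (H →L[ℂ] H)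

noncomputable instance {H : Type*} [NormedAddCommGroup H] [InnerProductSpace ℂ H]
    [CompleteSpace H] : Group (UnitarySOT H) :=
  inferInstanceAs (Group (unitary (H →L[ℂ] H)))

/-- The strong operator topology on `U(H)`: the topology of pointwise norm convergence,
i.e. the topology induced by the inclusion of `U(H)` into `H → H` with the product topology. -/
instance {H : Type*} [NormedAddCommGroup H] [InnerProductSpace ℂ H] [CompleteSpace H] :
    TopologicalSpace (UnitarySOT H) :=
  TopologicalSpace.induced
    (fun (u : unitary (H →L[ℂ] H)) (x : H) => (u : H →L[ℂ] H) x)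
    (inferInstance : TopologicalSpace (H → H))


lemma roundq (n : ℕ) (hn0 : 0 < n) (η : ℝ) (hη : 0 < η) : ∃ q : ℂ → ℂ, (∀ z, ‖q z‖ = 1) ∧
    (∀ z, ‖z‖ = 1 → ‖q z - z‖ ≤ η) ∧ (∀ z z', q z ^ n = q z' ^ n → q z = q z') := by
  obtain ⟨M, hM⟩ := exists_nat_gt (2 * Real.pi / η)
  have hπ := Real.pi_pos
  have hMpos : (0 : ℝ) < M := lt_trans (by positivity) hM
  have hn : n ≠ 0 := hn0.ne'
  set N : ℕ := n * M + 1 with hN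
  have hNpos : (0 : ℝ) < N := by positivity
  have hMN : (M : ℝ) ≤ N := by
    have : M ≤ N := by
      rw [hN]; nlinarith [Nat.one_le_iff_ne_zero.2 hn]
    exact_mod_cast this
  let k : ℂ → ℤ := fun z => round (z.arg * N / (2 * Real.pi))
  let θ : ℂ → ℝ := fun z => 2 * Real.pi * k z / N
  have hqN : ∀ z, Complex.exp (θ z * Complex.I) ^ N = 1 := by
    intro z
    rw [← Complex.exp_nat_mul, Complex.exp_eq_one_iff]
    refine ⟨k z, ?_⟩
    have : (N : ℂ) ≠ 0 := by exact_mod_cast hNpos.ne'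
    simp only [θ]
    push_cast
    field_simp
  refine ⟨fun z => Complex.exp (θ z * Complex.I), fun z => Complex.norm_exp_ofReal_mul_I _, ?_, ?_⟩
  · intro z hz
    have h1 : z = Complex.exp (z.arg * Complex.I) := by
      have := Complex.norm_mul_exp_arg_mul_I z
      rw [hz] at this; simpa using this.symm
    have h2 : |θ z - z.arg| ≤ η := by
      have h3 := abs_sub_round (z.arg * N / (2 * Real.pi))
      have h4 : θ z - z.arg = - ((z.arg * N / (2 * Real.pi) - k z) * (2 * Real.pi / N)) := by
        simp only [θ]; field_simp; ring
      rw [h4, abs_neg, abs_mul, abs_of_pos (by positivity : 0 < 2 * Real.pi / N)]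
      have h5 : 2 * Real.pi / N ≤ η := by
        rw [div_lt_iff₀ hη] at hM
        rw [div_le_iff₀ hNpos]
        nlinarith
      have h6 : 0 < 2 * Real.pi / N := by positivity
      calc _ ≤ 1 / 2 * (2 * Real.pi / N) := by gcongr
        _ ≤ η := by linarith
    have h3 : Complex.exp (θ z * Complex.I) - z =
        z * (Complex.exp (Complex.I * ((θ z - z.arg : ℝ) : ℂ)) - 1) := by
      conv_lhs => rw [h1]
      conv_rhs => enter [1]; rw [h1]
      rw [mul_sub, ← Complex.exp_add, mul_one, ← h1]
      congr 2
      push_cast; ring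
    show ‖Complex.exp (θ z * Complex.I) - z‖ ≤ η
    rw [h3, norm_mul, hz, one_mul]
    exact (Real.norm_exp_I_mul_ofReal_sub_one_le).trans h2
  · intro z z' h
    have key : ∀ a : ℂ, a ^ N = 1 → a = ((a ^ n) ^ M)⁻¹ := by
      intro a ha
      rw [hN, pow_succ, pow_mul] at ha
      exact eq_inv_of_mul_eq_one_right ha
    show Complex.exp (θ z * Complex.I) = Complex.exp (θ z' * Complex.I)
    rw [key _ (hqN z), key _ (hqN z')]
    simp only at h
    rw [h]

lemma rootOne (n : ℕ) (hn : 0 < n) (z l : ℂ) (hz : ‖z‖ = 1) (hl : ‖l‖ = 1) :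
    ∃ ρ : ℂ, ρ ^ n = z ∧ ‖ρ - l‖ ≤ 2 * ‖z - l ^ n‖ := by
  have hl0 : l ≠ 0 := by rintro rfl; simp at hl
  have hln : ‖l ^ n‖ = 1 := by simp [hl]
  set y := z / l ^ n with hy
  have hyn : ‖y‖ = 1 := by simp [hy, hz, hl]
  have hy0 : y ≠ 0 := by rintro h; simp [h] at hyn
  have h1 : y = Complex.exp (y.arg * Complex.I) := by
    have := Complex.norm_mul_exp_arg_mul_I y
    rw [hyn] at this; simpa using this.symm
  have hnC : (n : ℂ) ≠ 0 := by exact_mod_cast hn.ne'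
  refine ⟨l * Complex.exp (Complex.I * ((y.arg / n : ℝ) : ℂ)), ?_, ?_⟩
  · rw [mul_pow, ← Complex.exp_nat_mul]
    have : (n : ℂ) * (Complex.I * ((y.arg / n : ℝ) : ℂ)) = y.arg * Complex.I := by
      push_cast; field_simp
    rw [this, ← h1, hy]
    field_simp
  · have h2 : l * Complex.exp (Complex.I * ((y.arg / n : ℝ) : ℂ)) - l =
      l * (Complex.exp (Complex.I * ((y.arg / n : ℝ) : ℂ)) - 1) := by ring
    rw [h2, norm_mul, hl, one_mul]
    refine (Real.norm_exp_I_mul_ofReal_sub_one_le).trans ?_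
    have h3 : ‖z - l ^ n‖ = ‖y - 1‖ := by
      have : z - l ^ n = l ^ n * (y - 1) := by rw [hy]; field_simp
      rw [this, norm_mul, hln, one_mul]
    have h4 := Complex.angle_le_mul_norm_sub hyn (norm_one (α := ℂ))
    rw [Complex.angle_one_right hy0] at h4
    rw [h3, Real.norm_eq_abs, abs_div, Nat.abs_cast]
    have h5 : |y.arg| / n ≤ |y.arg| := div_le_self (abs_nonneg _) (by exact_mod_cast hn)
    have := Real.pi_le_four
    nlinarith [norm_nonneg (y - 1)]

lemma roots (n : ℕ) (hn : 0 < n) (F : Set ℂ) (hF : F.Finite) (h1 : ∀ l ∈ F, ‖l‖ = 1)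
    (hinj : Set.InjOn (fun l : ℂ => l ^ n) F) :
    ∃ C : ℝ, 0 ≤ C ∧ ∃ r : ℂ → ℂ, ∀ z, ‖z‖ = 1 → r z ^ n = z ∧
      ∀ l ∈ F, ‖r z - l‖ ≤ C * ‖z - l ^ n‖ := by
  obtain ⟨s, hs, hsep⟩ : ∃ s > 0, ∀ a ∈ F, ∀ b ∈ F, a ≠ b → s ≤ ‖a ^ n - b ^ n‖ := by
    have hP : {p ∈ F ×ˢ F | p.1 ≠ p.2}.Finite := (hF.prod hF).subset (Set.sep_subset _ _)
    obtain ⟨s, hs⟩ : ∃ s > 0, ∀ p ∈ {p ∈ F ×ˢ F | p.1 ≠ p.2}, s ≤ ‖p.1 ^ n - p.2 ^ n‖ := by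
      rcases Set.eq_empty_or_nonempty {p ∈ F ×ˢ F | p.1 ≠ p.2} with h | h
      · exact ⟨1, one_pos, by rw [h]; simp⟩
      · obtain ⟨p, hp, hmin⟩ := Set.exists_min_image _ (fun p : ℂ × ℂ => ‖p.1 ^ n - p.2 ^ n‖) hP h
        refine ⟨_, norm_pos_iff.2 (sub_ne_zero.2 fun he => hp.2 (hinj hp.1.1 hp.1.2 he)), hmin⟩
    exact ⟨s, hs.1, fun a ha b hb hab => hs.2 (a, b) ⟨⟨ha, hb⟩, hab⟩⟩
  have hC : 0 ≤ 4 / s := by positivity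
  refine ⟨2 + 4 / s, by positivity, ?_⟩
  have main : ∀ z : ℂ, ∃ ρ : ℂ, ‖z‖ = 1 → ρ ^ n = z ∧
      ∀ l ∈ F, ‖ρ - l‖ ≤ (2 + 4 / s) * ‖z - l ^ n‖ := by
    intro z
    by_cases hz : ‖z‖ = 1
    swap
    · exact ⟨0, fun h => absurd h hz⟩
    have far : ∀ ρ : ℂ, ρ ^ n = z → ∀ l ∈ F, s / 2 ≤ ‖z - l ^ n‖ →
        ‖ρ - l‖ ≤ (2 + 4 / s) * ‖z - l ^ n‖ := by
      intro ρ hρ l hl hd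
      have hρ1 : ‖ρ‖ = 1 := by
        rw [← hρ, norm_pow] at hz
        exact (pow_eq_one_iff_of_nonneg (norm_nonneg _) hn.ne').1 hz
      have h2 : ‖ρ - l‖ ≤ 2 := by
        have := norm_sub_le ρ l
        rw [hρ1, h1 l hl] at this; linarith
      have h3 : 4 / s * (s / 2) = 2 := by field_simp; norm_num
      nlinarith [norm_nonneg (z - l ^ n)]
    by_cases hnear : ∃ l ∈ F, ‖z - l ^ n‖ < s / 2
    · obtain ⟨l, hl, hd⟩ := hnear
      obtain ⟨ρ, hρ, hb⟩ := rootOne n hn z l hz (h1 l hl)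
      refine ⟨ρ, fun _ => ⟨hρ, fun l' hl' => ?_⟩⟩
      by_cases hll : l = l'
      · subst hll
        nlinarith [norm_nonneg (z - l ^ n), mul_nonneg hC (norm_nonneg (z - l ^ n))]
      · apply far ρ hρ l' hl'
        have h4 := hsep l hl l' hl' hll
        have h5 : ‖l ^ n - l' ^ n‖ ≤ ‖z - l ^ n‖ + ‖z - l' ^ n‖ := by
          have : l ^ n - l' ^ n = (z - l' ^ n) - (z - l ^ n) := by ring
          rw [this]
          linarith [norm_sub_le (z - l' ^ n) (z - l ^ n)]
        linarith
    · push Not at hnear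
      obtain ⟨ρ, hρ, -⟩ := rootOne n hn z 1 hz norm_one
      exact ⟨ρ, fun _ => ⟨hρ, fun l hl => far ρ hρ l hl (hnear l hl)⟩⟩
  choose r hr using main
  exact ⟨r, hr⟩

section
variable {H : Type*} [NormedAddCommGroup H] [InnerProductSpace ℂ H] [CompleteSpace H]

/-- block operator -/
noncomputable def blk (V : Submodule ℂ H) [CompleteSpace V] (T : V →L[ℂ] V) (c : ℂ) : H →L[ℂ] H :=
  V.subtypeL ∘L T ∘L V.orthogonalProjectionOnto +
    c • (1 - V.subtypeL ∘L V.orthogonalProjectionOnto)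

lemma blk_mul (V : Submodule ℂ H) [CompleteSpace V] (T T' : V →L[ℂ] V) (c c' : ℂ) :
    blk V T c * blk V T' c' = blk V (T * T') (c * c') := by
  ext x
  have h1 : V.orthogonalProjectionOnto (V.starProjection x) = V.orthogonalProjectionOnto x :=
    Submodule.orthogonalProjectionOnto_mem_subspace_eq_self (K := V) (V.orthogonalProjectionOnto x)
  have h2 : V.starProjection (V.starProjection x) = V.starProjection x :=
    congrArg Subtype.val h1
  simp [blk, mul_smul, smul_sub, h1, h2]

lemma blk_one (V : Submodule ℂ H) [CompleteSpace V] : blk V 1 1 = 1 := by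
  ext x
  simp [blk]

lemma blk_star (V : Submodule ℂ H) [CompleteSpace V] (T : V →L[ℂ] V) (c : ℂ) :
    star (blk V T c) = blk V (star T) (star c) := by
  have h1 : star (1 : H →L[ℂ] H) = 1 := star_one _
  rw [ContinuousLinearMap.star_eq_adjoint] at h1
  simp only [blk, ContinuousLinearMap.star_eq_adjoint, map_add, map_sub, map_smulₛₗ, h1,
    ContinuousLinearMap.adjoint_comp, Submodule.adjoint_subtypeL,
    Submodule.adjoint_orthogonalProjectionOnto]
  rfl

lemma blk_sub (V : Submodule ℂ H) [CompleteSpace V] (T : V →L[ℂ] V) (c z : ℂ) :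
    algebraMap ℂ (H →L[ℂ] H) z - blk V T c = blk V (algebraMap ℂ _ z - T) (z - c) := by
  ext x
  simp [blk, Algebra.algebraMap_eq_smul_one, sub_smul, smul_sub]
  abel

lemma blk_spectrum (V : Submodule ℂ H) [FiniteDimensional ℂ V] (T : V →L[ℂ] V) (c : ℂ) :
    (spectrum ℂ (blk V T c)).Finite := by
  have hT : (spectrum ℂ T).Finite := by
    have := Module.End.finite_hasEigenvalue (R := ℂ) (M := V) (T : V →ₗ[ℂ] V)
    refine this.subset ?_
    intro z hz
    have h2 := AlgEquiv.spectrum_eq (Module.End.toContinuousLinearMap (𝕜 := ℂ) V)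
      (T : V →ₗ[ℂ] V)
    apply Module.End.hasEigenvalue_iff_mem_spectrum.2
    rw [← h2]
    exact hz
  refine (hT.union (Set.finite_singleton c)).subset ?_
  intro z hz
  by_contra hcon
  simp only [Set.mem_union, Set.mem_singleton_iff, not_or] at hcon
  obtain ⟨h1, h2⟩ := hcon
  rw [spectrum.notMem_iff] at h1
  apply hz
  show IsUnit _
  rw [blk_sub]
  obtain ⟨S, hS⟩ := h1
  have h3 : z - c ≠ 0 := sub_ne_zero.2 h2
  refine ⟨⟨blk V (algebraMap ℂ _ z - T) (z - c), blk V (↑S⁻¹) (z - c)⁻¹, ?_, ?_⟩, rfl⟩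
  · rw [blk_mul, ← hS, Units.mul_inv, mul_inv_cancel₀ h3, blk_one]
  · rw [blk_mul, ← hS, Units.inv_mul, inv_mul_cancel₀ h3, blk_one]

lemma approxA (u : H →L[ℂ] H) (hu : u ∈ unitary (H →L[ℂ] H)) (X : Set H) (hX : X.Finite) :
    ∃ g ∈ unitary (H →L[ℂ] H), (∀ x ∈ X, g x = u x) ∧ (spectrum ℂ g).Finite := by
  set Y : Submodule ℂ H := Submodule.span ℂ X with hY
  set V : Submodule ℂ H := Y ⊔ Y.map (u : H →ₗ[ℂ] H) with hV
  have : FiniteDimensional ℂ Y := FiniteDimensional.span_of_finite ℂ hX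
  have : FiniteDimensional ℂ V := inferInstance
  have hn : ∀ x, ‖u x‖ = ‖x‖ := fun x => ContinuousLinearMap.norm_map_of_mem_unitary hu x
  let S : Submodule ℂ V := Y.comap V.subtype
  let L : S →ₗᵢ[ℂ] V :=
    { toFun := fun x => ⟨u (x : V), Submodule.mem_sup_right (Submodule.mem_map_of_mem x.2)⟩
      map_add' := by intro x y; ext; simp
      map_smul' := by intro c x; ext; simp
      norm_map' := by intro x; exact hn _ }
  let E : V ≃ₗᵢ[ℂ] V := L.extend.toLinearIsometryEquiv rfl
  let T : V →L[ℂ] V := (Unitary.linearIsometryEquiv.symm E : unitary (V →L[ℂ] V))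
  have hT : T ∈ unitary (V →L[ℂ] V) := (Unitary.linearIsometryEquiv.symm E).2
  refine ⟨blk V T 1, ?_, ?_, blk_spectrum V T 1⟩
  · rw [Unitary.mem_iff] at hT ⊢
    rw [blk_star, blk_mul, blk_mul, hT.1, hT.2]
    simp [blk_one]
  · intro x hx
    have hxY : x ∈ Y := Submodule.subset_span hx
    have hxV : x ∈ V := Submodule.mem_sup_left hxY
    have h1 : V.orthogonalProjectionOnto x = ⟨x, hxV⟩ :=
      Submodule.orthogonalProjectionOnto_mem_subspace_eq_self (K := V) ⟨x, hxV⟩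
    have h2 : T ⟨x, hxV⟩ = ⟨u x, Submodule.mem_sup_right (Submodule.mem_map_of_mem hxY)⟩ :=
      L.extend_apply ⟨⟨x, hxV⟩, hxY⟩
    simp [blk, h1, h2]
end
section
variable {H : Type*} [NormedAddCommGroup H] [InnerProductSpace ℂ H] [CompleteSpace H]

lemma normal_of_mem (g : H →L[ℂ] H) (hg : g ∈ unitary (H →L[ℂ] H)) : IsStarNormal g := by
  rw [Unitary.mem_iff] at hg
  exact ⟨by rw [Commute, SemiconjBy, hg.1, hg.2]⟩

lemma spec_norm (g : H →L[ℂ] H) (hg : g ∈ unitary (H →L[ℂ] H)) (z : ℂ) (hz : z ∈ spectrum ℂ g) :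
    ‖z‖ = 1 := by
  simpa using spectrum.subset_circle_of_unitary hg hz

lemma cfc_mem_unitary (g : H →L[ℂ] H) (hg : g ∈ unitary (H →L[ℂ] H)) (hs : (spectrum ℂ g).Finite)
    (f : ℂ → ℂ) (hf : ∀ z ∈ spectrum ℂ g, ‖f z‖ = 1) : cfc f g ∈ unitary (H →L[ℂ] H) := by
  have := normal_of_mem g hg
  rw [cfc_unitary_iff f g this (hs.continuousOn f)]
  intro z hz
  have := hf z hz
  rw [Complex.star_def, Complex.conj_mul', this]
  simp

lemma stepOne (n : ℕ) (hn : 0 < n) (u : H →L[ℂ] H) (hu : u ∈ unitary (H →L[ℂ] H)) (X : Finset H)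
    (ε : ℝ) (hε : 0 < ε) : ∃ w ∈ unitary (H →L[ℂ] H), (spectrum ℂ w).Finite ∧
      (∀ x ∈ X, ‖w x - u x‖ < ε) ∧ Set.InjOn (fun l : ℂ => l ^ n) (spectrum ℂ w) := by
  obtain ⟨g, hg, hgu, hs⟩ := approxA u hu X X.finite_toSet
  have hnorm := normal_of_mem g hg
  set M : ℝ := ∑ x ∈ X, ‖x‖ + 1 with hM
  have hMpos : 0 < M := by
    have : 0 ≤ ∑ x ∈ X, ‖x‖ := Finset.sum_nonneg fun _ _ => norm_nonneg _
    linarith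
  obtain ⟨q, hq1, hq2, hq3⟩ := roundq n hn (ε / M) (by positivity)
  have hspec : spectrum ℂ (cfc q g) = q '' spectrum ℂ g :=
    cfc_map_spectrum q g hnorm (hs.continuousOn q)
  refine ⟨cfc q g, cfc_mem_unitary g hg hs q fun z _ => hq1 z, ?_, ?_, ?_⟩
  · rw [hspec]; exact hs.image _
  · intro x hx
    have h1 : cfc q g - g = cfc (fun z => q z - z) g := by
      rw [cfc_sub q (fun z => z) g (hs.continuousOn _) (hs.continuousOn _), cfc_id' ℂ g]
    have h2 : ‖cfc q g - g‖ ≤ ε / M := by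
      rw [h1]
      exact norm_cfc_le (by positivity) fun z hz => hq2 z (spec_norm g hg z hz)
    have h3 : ‖x‖ < M := by
      have := Finset.single_le_sum (f := fun x : H => ‖x‖) (fun _ _ => norm_nonneg _) hx
      linarith
    rw [← hgu x hx]
    calc ‖cfc q g x - g x‖ = ‖(cfc q g - g) x‖ := rfl
      _ ≤ ‖cfc q g - g‖ * ‖x‖ := ContinuousLinearMap.le_opNorm _ _
      _ ≤ ε / M * ‖x‖ := by gcongr
      _ < ε / M * M := by gcongr
      _ = ε := by field_simp
  · rw [hspec]
    rintro _ ⟨z, _, rfl⟩ _ ⟨z', _, rfl⟩ h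
    exact hq3 z z' h

lemma eigdecomp (w : H →L[ℂ] H) (hw : w ∈ unitary (H →L[ℂ] H)) (hs : (spectrum ℂ w).Finite) :
    ∃ p : ℂ → H →L[ℂ] H, (∑ l ∈ hs.toFinset, p l = 1) ∧ ∀ l x, w (p l x) = l • p l x := by
  classical
  have hnorm := normal_of_mem w hw
  refine ⟨fun l => cfc (fun z => if z = l then 1 else 0) w, ?_, ?_⟩
  · rw [← cfc_sum _ _ _ (fun _ _ => hs.continuousOn _), ← cfc_one ℂ w]
    apply cfc_congr
    intro z hz
    simp [hz]
  · intro l x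
    have : w * cfc (fun z => if z = l then (1 : ℂ) else 0) w =
        l • cfc (fun z => if z = l then (1 : ℂ) else 0) w := by
      conv_lhs => enter [1]; rw [← cfc_id' ℂ w]
      rw [← cfc_mul _ _ _ (hs.continuousOn _) (hs.continuousOn _),
        ← cfc_smul _ _ _ (hs.continuousOn _)]
      apply cfc_congr
      intro z hz
      by_cases h : z = l <;> simp [h]
    exact congrArg (fun T : H →L[ℂ] H => T x) this

lemma root_op (n : ℕ) (hn : 0 < n) (g : H →L[ℂ] H) (hg : g ∈ unitary (H →L[ℂ] H))
    (hs : (spectrum ℂ g).Finite) (F : Set ℂ) (C : ℝ) (hC : 0 ≤ C) (r : ℂ → ℂ)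
    (hr : ∀ z, ‖z‖ = 1 → r z ^ n = z ∧ ∀ l ∈ F, ‖r z - l‖ ≤ C * ‖z - l ^ n‖) :
    ∃ v ∈ unitary (H →L[ℂ] H), v ^ n = g ∧
      ∀ l ∈ F, ∀ e, ‖v e - l • e‖ ≤ C * ‖g e - l ^ n • e‖ := by
  have hnorm := normal_of_mem g hg
  have hsp := spec_norm g hg
  refine ⟨cfc r g, cfc_mem_unitary g hg hs r ?_, ?_, ?_⟩
  · intro z hz
    have h1 := hsp z hz
    have h2 := (hr z h1).1
    rw [← h2, norm_pow] at h1
    exact (pow_eq_one_iff_of_nonneg (norm_nonneg _) hn.ne').1 h1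
  · rw [← cfc_pow _ _ _ (hs.continuousOn _)]
    conv_rhs => rw [← cfc_id' ℂ g]
    apply cfc_congr
    intro z hz
    exact (hr z (hsp z hz)).1
  · intro l hl e
    let h : ℂ → ℂ := fun z => (r z - l) / (z - l ^ n)
    have h1 : cfc r g - l • 1 = cfc h g * (g - l ^ n • 1) := by
      have e1 : cfc r g - l • 1 = cfc (fun z => r z - l) g := by
        rw [cfc_sub _ _ _ (hs.continuousOn _) (hs.continuousOn _), cfc_const l g,
          Algebra.algebraMap_eq_smul_one]
      have e2 : g - l ^ n • 1 = cfc (fun z => z - l ^ n) g := by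
        rw [cfc_sub _ _ _ (hs.continuousOn _) (hs.continuousOn _), cfc_const (l ^ n) g,
          Algebra.algebraMap_eq_smul_one, cfc_id' ℂ g]
      rw [e1, e2, ← cfc_mul _ _ _ (hs.continuousOn _) (hs.continuousOn _)]
      apply cfc_congr
      intro z hz
      by_cases hzl : z - l ^ n = 0
      · have := (hr z (hsp z hz)).2 l hl
        rw [hzl] at this
        simp only [norm_zero, mul_zero, norm_le_zero_iff] at this
        simp [h, hzl, this]
      · simp only [h]; field_simp
    have h2 : ‖cfc h g‖ ≤ C := by
      refine norm_cfc_le hC fun z hz => ?_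
      simp only [h, norm_div]
      exact div_le_of_le_mul₀ (norm_nonneg _) hC ((hr z (hsp z hz)).2 l hl)
    have h3 := congrArg (fun T : H →L[ℂ] H => T e) h1
    have h4 : cfc r g e - l • e = cfc h g (g e - l ^ n • e) := h3
    rw [h4]
    exact (ContinuousLinearMap.le_opNorm _ _).trans (by gcongr)

/-- the key category statement in terms of operators -/
lemma key (n : ℕ) (hn : 0 < n) (u : H →L[ℂ] H) (hu : u ∈ unitary (H →L[ℂ] H)) (X : Finset H)
    (ε : ℝ) (hε : 0 < ε) : ∃ w ∈ unitary (H →L[ℂ] H), ∃ Z : Finset H, ∃ δ > 0,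
      ∀ g ∈ unitary (H →L[ℂ] H), (∀ e ∈ Z, ‖g e - (w ^ n) e‖ < δ) →
      ∀ Y : Finset H, ∃ v ∈ unitary (H →L[ℂ] H), (∀ x ∈ X, ‖v x - u x‖ < ε) ∧
        ∀ y ∈ Y, (v ^ n) y = g y := by
  classical
  obtain ⟨w, hw, hs, hwu, hinj⟩ := stepOne n hn u hu X (ε / 2) (by positivity)
  obtain ⟨p, hp1, hp2⟩ := eigdecomp w hw hs
  obtain ⟨C, hC, r, hr⟩ := roots n hn (spectrum ℂ w) hs (spec_norm w hw) hinj
  set K : ℝ := hs.toFinset.card * C + 1 with hK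
  have hKpos : 0 < K := by positivity
  refine ⟨w, hw, Finset.image₂ (fun l x => p l x) hs.toFinset X, ε / 2 / K, by positivity, ?_⟩
  intro g hg hgw Y
  set Z := Finset.image₂ (fun l x => p l x) hs.toFinset X with hZ
  obtain ⟨g', hg', hgg, hs'⟩ := approxA g hg ((Z ∪ Y : Finset H) : Set H) (Finset.finite_toSet _)
  obtain ⟨v, hv, hvn, hve⟩ := root_op n hn g' hg' hs' _ C hC r hr
  refine ⟨v, hv, ?_, ?_⟩
  · intro x hx
    have hpow : ∀ l (m : ℕ), (w ^ m) (p l x) = l ^ m • p l x := by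
      intro l m
      induction m with
      | zero => simp
      | succ m ih =>
        rw [pow_succ, mul_apply_eq_comp, hp2, map_smul, ih, smul_smul, pow_succ']
    have h1 : ∀ l ∈ hs.toFinset, ‖v (p l x) - l • p l x‖ ≤ C * (ε / 2 / K) := by
      intro l hl
      refine (hve l (hs.mem_toFinset.1 hl) _).trans ?_
      have hz : p l x ∈ Z := Finset.mem_image₂_of_mem hl hx
      have := hgw _ hz
      rw [hpow, ← hgg (p l x) (by simp [hz])] at this
      gcongr
    have h2 : v x - w x = ∑ l ∈ hs.toFinset, (v (p l x) - l • p l x) := by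
      have hx1 : x = ∑ l ∈ hs.toFinset, p l x := by
        have := congrArg (fun T : H →L[ℂ] H => T x) hp1
        simpa using this.symm
      rw [Finset.sum_sub_distrib]
      simp_rw [← hp2]
      rw [← map_sum, ← map_sum, ← hx1]
    have h3 : ‖v x - w x‖ < ε / 2 := by
      rw [h2]
      calc _ ≤ ∑ l ∈ hs.toFinset, C * (ε / 2 / K) := norm_sum_le_of_le _ h1
        _ = (hs.toFinset.card * C) * (ε / 2 / K) := by simp [mul_assoc]
        _ < K * (ε / 2 / K) := by
          apply mul_lt_mul_of_pos_right _ (by positivity)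
          rw [hK]; linarith
        _ = ε / 2 := by field_simp
    have h4 := norm_add_le (v x - w x) (w x - u x)
    rw [sub_add_sub_cancel] at h4
    linarith [hwu x hx]
  · intro y hy
    rw [hvn]
    exact hgg y (by simp [hy])
end
section
variable {H : Type*} [NormedAddCommGroup H] [InnerProductSpace ℂ H] [CompleteSpace H]

/-- underlying operator -/
def UnitarySOT.op (u : UnitarySOT H) : H →L[ℂ] H := Subtype.val (p := fun x => x ∈ unitary (H →L[ℂ] H)) u

/-- unitary from operator -/
def UnitarySOT.mk (u : H →L[ℂ] H) (hu : u ∈ unitary (H →L[ℂ] H)) : UnitarySOT H :=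
  (⟨u, hu⟩ : unitary (H →L[ℂ] H))

lemma op_mk (u : H →L[ℂ] H) (hu : u ∈ unitary (H →L[ℂ] H)) : (UnitarySOT.mk u hu).op = u := rfl

lemma op_mem (u : UnitarySOT H) : u.op ∈ unitary (H →L[ℂ] H) :=
  Subtype.property (p := fun x => x ∈ unitary (H →L[ℂ] H)) u

lemma op_pow (u : UnitarySOT H) (n : ℕ) : (u ^ n).op = u.op ^ n := by
  induction n with
  | zero => rfl
  | succ n ih => rw [pow_succ, pow_succ, ← ih]; rfl

lemma op_inducing : IsInducing (fun (u : UnitarySOT H) (x : H) => u.op x) := ⟨rfl⟩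

lemma op_continuous (x : H) : Continuous (fun u : UnitarySOT H => u.op x) :=
  (continuous_apply x).comp op_inducing.continuous

lemma op_pow_continuous (n : ℕ) : ∀ x : H, Continuous (fun u : UnitarySOT H => (u.op ^ n) x) := by
  induction n with
  | zero => intro x; simpa using continuous_const
  | succ n ih =>
    intro x
    rw [continuous_iff_continuousAt]
    intro u
    have h1 : Filter.Tendsto (fun v : UnitarySOT H => ‖(v.op ^ n) x - (u.op ^ n) x‖ +
        ‖v.op ((u.op ^ n) x) - u.op ((u.op ^ n) x)‖) (𝓝 u) (𝓝 0) := by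
      have : Continuous (fun v : UnitarySOT H => ‖(v.op ^ n) x - (u.op ^ n) x‖ +
        ‖v.op ((u.op ^ n) x) - u.op ((u.op ^ n) x)‖) :=
        (((ih x).sub continuous_const).norm).add (((op_continuous _).sub continuous_const).norm)
      have h := this.tendsto u
      simpa using h
    rw [ContinuousAt, tendsto_iff_norm_sub_tendsto_zero]
    refine squeeze_zero (fun _ => norm_nonneg _) (fun v => ?_) h1
    have h2 : (v.op ^ (n + 1)) x - (u.op ^ (n + 1)) x = v.op ((v.op ^ n) x - (u.op ^ n) x) +
        (v.op ((u.op ^ n) x) - u.op ((u.op ^ n) x)) := by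
      rw [pow_succ', pow_succ', mul_apply_eq_comp, mul_apply_eq_comp, map_sub]
      abel
    rw [h2]
    refine (norm_add_le _ _).trans ?_
    rw [ContinuousLinearMap.norm_map_of_mem_unitary (op_mem v)]

lemma pow_continuous_SOT (n : ℕ) : Continuous (fun u : UnitarySOT H => u ^ n) := by
  rw [op_inducing.continuous_iff, continuous_pi_iff]
  intro x
  simp only [Function.comp_def, op_pow]
  exact op_pow_continuous n x

lemma nhds_SOT (W : Set (UnitarySOT H)) (hW : IsOpen W) (u : UnitarySOT H) (hu : u ∈ W) :
    ∃ X : Finset H, ∃ ε > 0, ∀ v : UnitarySOT H, (∀ x ∈ X, ‖v.op x - u.op x‖ < ε) → v ∈ W := by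
  obtain ⟨t, ht, rfl⟩ := op_inducing.isOpen_iff.1 hW
  rw [isOpen_pi_iff] at ht
  obtain ⟨I, s, hs, hsub⟩ := ht _ hu
  have : ∀ x ∈ I, ∃ ε > 0, Metric.ball (u.op x) ε ⊆ s x := fun x hx =>
    Metric.isOpen_iff.1 (hs x hx).1 _ (hs x hx).2
  choose! e he1 he2 using this
  rcases I.eq_empty_or_nonempty with hI | hI
  · exact ⟨∅, 1, one_pos, fun v _ => hsub (by simp [hI])⟩
  obtain ⟨m, hm, hmin⟩ := I.exists_min_image e hI
  refine ⟨I, e m, he1 m hm, fun v hv => hsub fun x hx => he2 x hx ?_⟩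
  rw [Metric.mem_ball, dist_eq_norm]
  exact (hv x hx).trans_le (hmin x hx)

lemma dense_preimage (n : ℕ) (hn : 0 < n) (S : Set (UnitarySOT H)) (hS : IsOpen S)
    (hd : Dense S) : Dense ((fun u : UnitarySOT H => u ^ n) ⁻¹' S) := by
  rw [dense_iff_inter_open]
  rintro W hW ⟨u, hu⟩
  obtain ⟨X, ε, hε, hXW⟩ := nhds_SOT W hW u hu
  obtain ⟨w, hw, Z, δ, hδ, hk⟩ := key n hn u.op (op_mem u) X ε hε
  let O : Set (UnitarySOT H) := ⋂ e ∈ Z, {g | ‖g.op e - (w ^ n) e‖ < δ}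
  have hO : IsOpen O := isOpen_biInter_finset fun e _ =>
    isOpen_lt ((op_continuous e).sub continuous_const).norm continuous_const
  have hne : O.Nonempty := ⟨UnitarySOT.mk (w ^ n) (pow_mem hw n), by simp [O, op_mk, hδ]⟩
  obtain ⟨g, hgO, hgS⟩ := hd.inter_open_nonempty O hO hne
  obtain ⟨Y, η, hη, hY⟩ := nhds_SOT S hS g hgS
  obtain ⟨v, hv, hvX, hvY⟩ := hk g.op (op_mem g) (fun e he => by simpa using Set.mem_iInter₂.1 hgO e he) Y
  refine ⟨UnitarySOT.mk v hv, hXW _ hvX, hY _ fun y hy => ?_⟩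
  rw [op_pow, op_mk, hvY y hy]
  simpa using hη

end

/-- Let `H` be a separable infinite-dimensional complex Hilbert space and `U(H)` its unitary
group with the strong operator topology. For every positive integer `n`, the map
`f_n : U(H) → U(H)`, `f_n(u) = uⁿ`, is category preserving: preimages of comeager sets are
comeager. -/
theorem statement11 (H : Type*) [NormedAddCommGroup H] [InnerProductSpace ℂ H]
    [CompleteSpace H] [TopologicalSpace.SeparableSpace H]
    (hinf : ¬ FiniteDimensional ℂ H) (n : ℕ) (hn : 0 < n) :
    ∀ S : Set (UnitarySOT H), S ∈ residual (UnitarySOT H) →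
      (fun u : UnitarySOT H => u ^ n) ⁻¹' S ∈ residual (UnitarySOT H) := by
  intro S hS
  rw [mem_residual_iff] at hS
  obtain ⟨T, hTo, hTd, hTc, hTS⟩ := hS
  rw [mem_residual_iff]
  refine ⟨(fun t => (fun u : UnitarySOT H => u ^ n) ⁻¹' t) '' T, ?_, ?_, hTc.image _, ?_⟩
  · rintro _ ⟨t, ht, rfl⟩
    exact (hTo t ht).preimage (pow_continuous_SOT n)
  · rintro _ ⟨t, ht, rfl⟩
    exact dense_preimage n hn t (hTo t ht) (hTd t ht)
  · intro u hu
    apply hTS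
    intro t ht
    exact hu _ ⟨t, ht, rfl⟩
end

section
/- Let H be a separable infinite-dimensional complex Hilbert space and let U(H) be its unitary group with the strong operator topology. Then the set of all u ∈ U(H) whose conjugacy class {v u v⁻¹ : v ∈ U(H)} is dense in U(H) is itself dense in U(H). -/
open MeasureTheory Topology

theorem aux_diag (n : ℕ) : ∀ (E : Type*) [NormedAddCommGroup E] [InnerProductSpace ℂ E]
    [FiniteDimensional ℂ E] (_ : Module.finrank ℂ E = n) (T : E →ₗᵢ[ℂ] E),
    ∃ (v : Fin n → E) (μ : Fin n → ℂ), Orthonormal ℂ v ∧ ∀ i, T (v i) = μ i • v i := by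
  induction n with
  | zero =>
    intro E _ _ _ _ T
    exact ⟨fun i => i.elim0, fun i => i.elim0, ⟨fun i => i.elim0, fun i => i.elim0⟩,
      fun i => i.elim0⟩
  | succ n ih =>
    intro E _ _ _ hE T
    have : Nontrivial E := Module.nontrivial_of_finrank_pos (R := ℂ) (by omega)
    obtain ⟨μ, hμ⟩ := Module.End.exists_eigenvalue (K := ℂ) (T.toLinearMap : Module.End ℂ E)
    obtain ⟨x, hx⟩ := hμ.exists_hasEigenvector
    have hTx : T x = μ • x := hx.apply_eq_smul
    have hx0 : x ≠ 0 := hx.2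
    have hμ0 : μ ≠ 0 := by
      rintro rfl
      rw [zero_smul] at hTx
      exact hx0 (T.injective (by simpa using hTx))
    set K : Submodule ℂ E := (Submodule.span ℂ {x})ᗮ with hK
    have : Fact (Module.finrank ℂ E = n + 1) := ⟨hE⟩
    have hKn : Module.finrank ℂ K = n :=
      Submodule.finrank_orthogonal_span_singleton hx0
    have hinv : ∀ y ∈ K, T y ∈ K := by
      intro y hy
      rw [hK, Submodule.mem_orthogonal_singleton_iff_inner_right] at hy ⊢
      have h1 : inner ℂ (T x) (T y) = 0 := by rw [T.inner_map_map, hy]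
      rw [hTx, inner_smul_left] at h1
      simpa [hμ0] using h1
    let T' : K →ₗᵢ[ℂ] K :=
      { toLinearMap := T.toLinearMap.restrict hinv
        norm_map' := fun y => T.norm_map y }
    obtain ⟨v, m, hv, hm⟩ := ih K hKn T'
    let c : ℂ := ((‖x‖⁻¹ : ℝ) : ℂ)
    refine ⟨Matrix.vecCons (c • x) (fun i => (v i : E)), Matrix.vecCons μ m, ?_, ?_⟩
    · rw [orthonormal_vecCons_iff]
      refine ⟨?_, ?_, ?_⟩
      · simp [c, norm_smul, hx0]
      · intro i
        have : inner ℂ x (v i : E) = 0 :=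
          Submodule.mem_orthogonal_singleton_iff_inner_right.1 (v i).2
        rw [inner_smul_left, this, mul_zero]
      · exact hv.comp_linearIsometry K.subtypeₗᵢ
    · intro i
      refine Fin.cases ?_ (fun j => ?_) i
      · simp only [Matrix.cons_val_zero, map_smul, hTx]
        exact smul_comm _ _ _
      · have := congrArg (Subtype.val) (hm j)
        exact this

theorem aux_basis {H : Type*} [NormedAddCommGroup H] [InnerProductSpace ℂ H]
    [CompleteSpace H] [TopologicalSpace.SeparableSpace H]
    (hinf : ¬ FiniteDimensional ℂ H) {m : ℕ} (f : Fin m → H) (hf : Orthonormal ℂ f)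
    (g : Fin m → ℕ) (hg : Function.Injective g) :
    ∃ b : HilbertBasis ℕ ℂ H, ∀ j, b (g j) = f j := by
  obtain ⟨w, b, hw, hb⟩ := hf.toSubtypeRange.exists_hilbertBasis_extension
  have hon : Orthonormal ℂ ((↑) : w → H) := hb ▸ b.orthonormal
  have : Countable w := by
    refine Pairwise.countable_of_isOpen_disjoint (s := fun i : w => Metric.ball (i : H) (1/2))
      ?_ (fun i => Metric.isOpen_ball) (fun i => ⟨i, Metric.mem_ball_self (by norm_num)⟩)
    intro i j hij
    apply Metric.ball_disjoint_ball
    have h0 : inner ℂ (i : H) (j : H) = 0 := hon.2 hij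
    have h1 := norm_sub_sq (𝕜 := ℂ) (i : H) (j : H)
    rw [h0, hon.1 i, hon.1 j] at h1
    rw [dist_eq_norm]
    norm_num at h1
    nlinarith [norm_nonneg ((i : H) - j)]
  have : Infinite w := by
    by_contra h
    rw [not_infinite_iff_finite] at h
    have := Fintype.ofFinite w
    exact hinf b.toOrthonormalBasis.toBasis.finiteDimensional_of_finite
  obtain ⟨τ⟩ : Nonempty (ℕ ≃ w) := nonempty_equiv_of_countable
  let y : Fin m → ℕ := fun j => τ.symm ⟨f j, hw ⟨j, rfl⟩⟩
  have hy : Function.Injective y := by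
    intro a c hac
    have := τ.symm.injective hac
    exact hf.linearIndependent.injective (congrArg Subtype.val this)
  obtain ⟨σ, hσ⟩ := Equiv.Perm.exists_extending_pair g y hg hy
  let ρ : ℕ ≃ w := σ.trans τ
  have hon' : Orthonormal ℂ (fun n => (ρ n : H)) := hon.comp ρ ρ.injective
  have hr : Set.range (fun n => (ρ n : H)) = Set.range b := by
    rw [hb]
    exact ρ.surjective.range_comp ((↑) : w → H)
  refine ⟨HilbertBasis.mk hon' (by rw [hr, b.dense_span]), fun j => ?_⟩
  rw [HilbertBasis.coe_mk]
  have : σ (g j) = y j := hσ j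
  simp [ρ, this, y]

theorem aux_iso {H : Type*} [NormedAddCommGroup H] [InnerProductSpace ℂ H]
    (b b' : HilbertBasis ℕ ℂ H) : ∃ v : H ≃ₗᵢ[ℂ] H, ∀ i, v (b i) = b' i := by
  classical
  refine ⟨b.repr.trans b'.repr.symm, fun i => ?_⟩
  simp [HilbertBasis.repr_self, HilbertBasis.repr_symm_single]

theorem aux_diagOp {H : Type*} [NormedAddCommGroup H] [InnerProductSpace ℂ H] [CompleteSpace H]
    (b : HilbertBasis ℕ ℂ H) (l : ℕ → Circle) :
    ∃ u : H ≃ₗᵢ[ℂ] H, ∀ i, u (b i) = (l i : ℂ) • b i := by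
  have hon : Orthonormal ℂ (fun i => (l i : ℂ) • b i) := by
    refine ⟨fun i => ?_, fun i j hij => ?_⟩
    · rw [norm_smul, b.orthonormal.1 i, mul_one]
      exact Circle.norm_coe _
    · simp [inner_smul_left, inner_smul_right, b.orthonormal.2 hij]
  have hsp : Submodule.span ℂ (Set.range b) ≤
      Submodule.span ℂ (Set.range (fun i => (l i : ℂ) • b i)) := by
    rw [Submodule.span_le]
    rintro _ ⟨i, rfl⟩
    have h := Submodule.smul_mem _ ((l i : ℂ)⁻¹)
      (Submodule.subset_span (R := ℂ) (Set.mem_range_self (f := fun i => (l i : ℂ) • b i) i))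
    simpa [smul_smul] using h
  obtain ⟨u, hu⟩ := aux_iso b (HilbertBasis.mk hon
    (by rw [← b.dense_span]; exact Submodule.topologicalClosure_mono hsp))
  exact ⟨u, fun i => by rw [hu, HilbertBasis.coe_mk]⟩

/-- Every unitary agrees on a finite set with something diagonalizable. -/
theorem aux_approx {H : Type*} [NormedAddCommGroup H] [InnerProductSpace ℂ H]
    (w : H →ₗᵢ[ℂ] H) (I : Finset H) :
    ∃ (m : ℕ) (f : Fin m → H) (μ : Fin m → ℂ) (c : H → Fin m → ℂ), Orthonormal ℂ f ∧
      (∀ j, ‖μ j‖ = 1) ∧ ∀ x ∈ I, x = ∑ j, c x j • f j ∧ w x = ∑ j, c x j • μ j • f j := by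
  classical
  let F : Submodule ℂ H := Submodule.span ℂ (I : Set H)
  let E : Submodule ℂ H := F ⊔ F.map w.toLinearMap
  have : FiniteDimensional ℂ F := FiniteDimensional.span_finset ℂ I
  have : FiniteDimensional ℂ E := by infer_instance
  let S : Submodule ℂ E := F.comap E.subtype
  let L : S →ₗᵢ[ℂ] E :=
    { toFun := fun x => ⟨w x, Submodule.mem_sup_right (Submodule.mem_map_of_mem x.2)⟩
      map_add' := fun x y => by ext; simp
      map_smul' := fun r x => by ext; simp
      norm_map' := fun x => w.norm_map x }
  obtain ⟨v, μ, hv, hμ⟩ := aux_diag _ E rfl L.extend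
  have hspan := hv.linearIndependent.span_eq_top_of_card_eq_finrank' (by simp)
  have hc : ∀ x : H, ∃ c : Fin (Module.finrank ℂ E) → ℂ, ∀ hx : x ∈ E,
      ∑ j, c j • v j = ⟨x, hx⟩ := by
    intro x
    by_cases hx : x ∈ E
    · have : (⟨x, hx⟩ : E) ∈ Submodule.span ℂ (Set.range v) := by rw [hspan]; trivial
      obtain ⟨c, hc⟩ := (Submodule.mem_span_range_iff_exists_fun ℂ).1 this
      exact ⟨c, fun _ => hc⟩
    · exact ⟨0, fun h => (hx h).elim⟩
  choose c hc using hc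
  refine ⟨_, fun j => (v j : H), μ, c, hv.comp_linearIsometry E.subtypeₗᵢ, fun j => ?_, ?_⟩
  · have h := L.extend.norm_map (v j)
    rw [hμ, norm_smul, hv.1 j, mul_one] at h
    exact h
  · intro x hx
    have hxF : x ∈ F := Submodule.subset_span hx
    have hxE : x ∈ E := Submodule.mem_sup_left hxF
    have h1 := hc x hxE
    refine ⟨by simpa using (congrArg Subtype.val h1).symm, ?_⟩
    have h2 : L.extend ⟨x, hxE⟩ = ⟨w x, Submodule.mem_sup_right (Submodule.mem_map_of_mem hxF)⟩ :=
      L.extend_apply ⟨⟨x, hxE⟩, hxF⟩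
    rw [← h1, map_sum] at h2
    simp only [map_smul, hμ] at h2
    have h3 := congrArg Subtype.val h2
    simpa using h3.symm

theorem aux_exists {H : Type*} [NormedAddCommGroup H] [InnerProductSpace ℂ H]
    [CompleteSpace H] [TopologicalSpace.SeparableSpace H]
    (hinf : ¬ FiniteDimensional ℂ H) :
    ∃ u : H ≃ₗᵢ[ℂ] H, ∀ (w : H ≃ₗᵢ[ℂ] H) (I : Finset H) (ε : ℝ), 0 < ε →
      ∃ v : H ≃ₗᵢ[ℂ] H, ∀ x ∈ I, dist (v (u (v.symm x))) (w x) < ε := by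
  obtain ⟨e, -⟩ := aux_basis hinf (m := 0) (fun i => i.elim0)
    ⟨fun i => i.elim0, fun i => i.elim0⟩ (fun i => i.elim0) (fun i => i.elim0)
  let d := TopologicalSpace.denseSeq Circle
  obtain ⟨u, hu⟩ := aux_diagOp e (fun n => d (Nat.unpair n).1)
  refine ⟨u, fun w I ε hε => ?_⟩
  obtain ⟨m, f, μ, c, hf, hμ, hI⟩ := aux_approx w.toLinearIsometry I
  let C : ℝ := 1 + ∑ x ∈ I, ∑ j, ‖c x j‖
  have hC0 : 0 ≤ ∑ x ∈ I, ∑ j, ‖c x j‖ := by positivity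
  have hC : 0 < C := by positivity
  have hk : ∀ j, ∃ k, dist (d k : ℂ) (μ j) < ε / C := by
    intro j
    obtain ⟨k, hk⟩ := (TopologicalSpace.denseRange_denseSeq Circle).exists_dist_lt
      (⟨μ j, by simp [Submonoid.unitSphere, hμ j]⟩ : Circle) (div_pos hε hC)
    exact ⟨k, by rw [dist_comm]; exact hk⟩
  choose k hk using hk
  obtain ⟨b, hb⟩ := aux_basis hinf f hf (fun j => Nat.pair (k j) j) (by
    intro i j hij
    have := (Nat.pair_eq_pair.1 hij).2
    exact Fin.ext this)
  obtain ⟨v, hv⟩ := aux_iso e b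
  have hvf : ∀ j, v (u (v.symm (f j))) = (d (k j) : ℂ) • f j := by
    intro j
    have h1 : v.symm (f j) = e (Nat.pair (k j) j) := by
      rw [LinearIsometryEquiv.symm_apply_eq, hv, hb]
    rw [h1, hu, map_smul, hv, hb]
    simp
  refine ⟨v, fun x hx => ?_⟩
  obtain ⟨h1, h2⟩ := hI x hx
  have h3 : v (u (v.symm x)) = ∑ j, c x j • (d (k j) : ℂ) • f j := by
    conv_lhs => rw [h1]
    simp only [map_sum, map_smul, hvf]
  have h2' : w x = ∑ j, c x j • μ j • f j := h2
  rw [h3, h2', dist_eq_norm, ← Finset.sum_sub_distrib]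
  calc ‖∑ j, (c x j • (d (k j) : ℂ) • f j - c x j • μ j • f j)‖
      ≤ ∑ j, ‖c x j • (d (k j) : ℂ) • f j - c x j • μ j • f j‖ := norm_sum_le _ _
    _ ≤ ∑ j, ‖c x j‖ * (ε / C) := by
        refine Finset.sum_le_sum fun j _ => ?_
        rw [← smul_sub, ← sub_smul, norm_smul, norm_smul, hf.1 j, mul_one, ← dist_eq_norm]
        exact mul_le_mul_of_nonneg_left (hk j).le (norm_nonneg _)
    _ = (∑ j, ‖c x j‖) * (ε / C) := by rw [Finset.sum_mul]
    _ < C * (ε / C) := by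
        refine mul_lt_mul_of_pos_right ?_ (div_pos hε hC)
        have := Finset.single_le_sum (f := fun x => ∑ j, ‖c x j‖)
          (fun i _ => by positivity) hx
        simp only [C]
        linarith
    _ = ε := by field_simp

theorem aux_dense {H : Type*} [NormedAddCommGroup H] [InnerProductSpace ℂ H]
    [CompleteSpace H] (A : Set (UnitarySOT H))
    (h : ∀ (w : UnitarySOT H) (I : Finset H) (ε : ℝ), 0 < ε → ∃ a ∈ A, ∀ x ∈ I,
      dist (Unitary.linearIsometryEquiv (𝕜 := ℂ) (H := H) a x)
        (Unitary.linearIsometryEquiv (𝕜 := ℂ) (H := H) w x) < ε) : Dense A := by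
  intro w
  rw [(Topology.IsInducing.mk rfl : Topology.IsInducing
    (fun (u : UnitarySOT H) (x : H) => Unitary.linearIsometryEquiv (𝕜 := ℂ) (H := H) u x)
    ).closure_eq_preimage_closure_image]
  rw [Set.mem_preimage, mem_closure_iff_nhds]
  intro t ht
  rw [nhds_pi, Filter.mem_pi] at ht
  obtain ⟨I, hIf, s, hs, hst⟩ := ht
  choose r hr hrs using fun x => Metric.mem_nhds_iff.1 (hs x)
  obtain ⟨ε, hε, hεr⟩ : ∃ ε > 0, ∀ x ∈ hIf.toFinset, ε ≤ r x := by
    rcases hIf.toFinset.eq_empty_or_nonempty with h0 | h0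
    · exact ⟨1, one_pos, by simp [h0]⟩
    · refine ⟨hIf.toFinset.inf' h0 r, ?_, fun x hx => Finset.inf'_le _ hx⟩
      rw [gt_iff_lt, Finset.lt_inf'_iff]
      exact fun x _ => hr x
  obtain ⟨a, ha, haI⟩ := h w hIf.toFinset ε hε
  refine ⟨_, hst ?_, Set.mem_image_of_mem _ ha⟩
  intro x hx
  have hx' : x ∈ hIf.toFinset := by simpa using hx
  exact hrs x (lt_of_lt_of_le (haI x hx') (hεr x hx'))

/-- Let `H` be a separable infinite-dimensional complex Hilbert space and `U(H)` its unitary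
group with the strong operator topology. The set of `u ∈ U(H)` whose conjugacy class
`{v u v⁻¹ : v ∈ U(H)}` is dense in `U(H)` is itself dense in `U(H)`. -/
theorem statement12 (H : Type*) [NormedAddCommGroup H] [InnerProductSpace ℂ H]
    [CompleteSpace H] [TopologicalSpace.SeparableSpace H]
    (hinf : ¬ FiniteDimensional ℂ H) :
    Dense {u : UnitarySOT H | Dense {w : UnitarySOT H | ∃ v : UnitarySOT H, w = v * u * v⁻¹}} := by
  obtain ⟨u, hu⟩ := aux_exists hinf
  let φ : UnitarySOT H ≃* (H ≃ₗᵢ[ℂ] H) := Unitary.linearIsometryEquiv (𝕜 := ℂ) (H := H)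
  have key : Dense {w : UnitarySOT H | ∃ v : UnitarySOT H, w = v * φ.symm u * v⁻¹} := by
    apply aux_dense
    intro w I ε hε
    obtain ⟨v, hv⟩ := hu (φ w) I ε hε
    refine ⟨φ.symm v * φ.symm u * (φ.symm v)⁻¹, ⟨_, rfl⟩, ?_⟩
    have h : φ (φ.symm v * φ.symm u * (φ.symm v)⁻¹) = v * u * v⁻¹ := by simp
    intro x hx
    change dist (φ (φ.symm v * φ.symm u * (φ.symm v)⁻¹) x) _ < ε
    rw [h]
    exact hv x hx
  refine key.mono ?_
  rintro w ⟨v, rfl⟩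
  refine key.mono ?_
  rintro _ ⟨z, rfl⟩
  exact ⟨z * v⁻¹, by group⟩
end

section
/- Let H be a separable infinite-dimensional complex Hilbert space and let U(H) be its unitary group with the strong operator topology. Let G ⊆ U(H) be a subset with the Baire property. Then G is comeager in U(H) if and only if for comeagerly many u ∈ U(H), the set G ∩ cl(⟨u⟩) is comeager in cl(⟨u⟩), where cl(⟨u⟩) denotes the closure in U(H) of the cyclic group generated by u, equipped with the subspace topology. -/
open MeasureTheory Topology

namespace USOT

variable {H : Type*} [NormedAddCommGroup H] [InnerProductSpace ℂ H] [CompleteSpace H]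

noncomputable def L : UnitarySOT H ≃* (H ≃ₗᵢ[ℂ] H) := Unitary.linearIsometryEquiv

theorem isInducing_L : IsInducing (fun (u : UnitarySOT H) (x : H) => L u x) := ⟨rfl⟩

theorem L_mul (u v : UnitarySOT H) (x : H) : L (u * v) x = L u (L v x) := by
  rw [map_mul]; rfl

theorem L_one (x : H) : L (1 : UnitarySOT H) x = x := by
  rw [map_one]; rfl

theorem L_inv_apply (u : UnitarySOT H) (x : H) : L u⁻¹ (L u x) = x := by
  rw [← L_mul, inv_mul_cancel, L_one]

theorem L_apply_inv (u : UnitarySOT H) (x : H) : L u (L u⁻¹ x) = x := by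
  rw [← L_mul, mul_inv_cancel, L_one]

theorem L_ext {u v : UnitarySOT H} (h : ∀ x, L u x = L v x) : u = v :=
  L.injective (LinearIsometryEquiv.ext h)

theorem tendsto_iff {α : Type*} {l : Filter α} {f : α → UnitarySOT H} {u : UnitarySOT H} :
    Filter.Tendsto f l (𝓝 u) ↔ ∀ x, Filter.Tendsto (fun a => L (f a) x) l (𝓝 (L u x)) := by
  rw [isInducing_L.tendsto_nhds_iff, tendsto_pi_nhds]; rfl

theorem continuous_L (x : H) : Continuous (fun u : UnitarySOT H => L u x) :=
  (continuous_apply x).comp isInducing_L.continuous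

theorem exists_nhds {O : Set (UnitarySOT H)} {u : UnitarySOT H} (hO : O ∈ 𝓝 u) :
    ∃ (X : Finset H) (ε : ℝ), 0 < ε ∧ ∀ v, (∀ x ∈ X, ‖L v x - L u x‖ < ε) → v ∈ O := by
  classical
  by_contra! hcon
  choose f hf hf2 using fun p : Finset H × ℕ => hcon p.1 (1 / ((p.2 : ℝ) + 1)) (by positivity)
  have : Filter.Tendsto f Filter.atTop (𝓝 u) := by
    rw [tendsto_iff]
    intro x
    rw [Metric.tendsto_atTop]
    intro ε hε
    obtain ⟨n, hn⟩ := exists_nat_one_div_lt hε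
    refine ⟨({x}, n), fun p hp => ?_⟩
    rw [dist_eq_norm]
    refine (hf p x (hp.1 (by simp))).trans_le (le_trans ?_ hn.le)
    have : (n : ℝ) ≤ p.2 := by exact_mod_cast hp.2
    gcongr
  obtain ⟨p, hp⟩ := (this.eventually hO).exists
  exact hf2 p hp

instance : IsTopologicalGroup (UnitarySOT H) where
  continuous_mul := by
    rw [continuous_iff_continuousAt]
    rintro ⟨u, v⟩
    refine tendsto_iff.2 fun x => ?_
    simp only [L_mul]
    have h1 : Filter.Tendsto (fun p : UnitarySOT H × UnitarySOT H => L p.1 (L v x)) (𝓝 (u, v))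
        (𝓝 (L u (L v x))) := ((continuous_L (L v x)).comp continuous_fst).tendsto (u, v)
    have h2 : Filter.Tendsto (fun p : UnitarySOT H × UnitarySOT H => L p.2 x) (𝓝 (u, v))
        (𝓝 (L v x)) := ((continuous_L x).comp continuous_snd).tendsto (u, v)
    have h3 : Filter.Tendsto (fun p : UnitarySOT H × UnitarySOT H =>
        L p.1 (L p.2 x - L v x)) (𝓝 (u, v)) (𝓝 0) := by
      rw [tendsto_zero_iff_norm_tendsto_zero]
      simp only [LinearIsometryEquiv.norm_map]
      rw [← tendsto_zero_iff_norm_tendsto_zero]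
      simpa using h2.sub_const (L v x)
    simpa using h3.add h1
  continuous_inv := by
    rw [continuous_iff_continuousAt]
    intro u
    refine tendsto_iff.2 fun x => ?_
    have h1 := (continuous_L (L u⁻¹ x)).tendsto u
    rw [tendsto_iff_norm_sub_tendsto_zero] at h1 ⊢
    refine h1.congr fun v => ?_
    rw [← LinearIsometryEquiv.norm_map (L v⁻¹), map_sub, L_inv_apply, L_apply_inv, norm_sub_rev]

theorem isInducing_dense [TopologicalSpace.SeparableSpace H] :
    IsInducing (fun (u : UnitarySOT H) (n : ℕ) => L u (TopologicalSpace.denseSeq H n)) := by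
  rw [isInducing_iff_nhds]
  intro u
  apply le_antisymm
  · rw [← Filter.tendsto_iff_comap]
    exact (continuous_pi fun n => continuous_L _).tendsto u
  · suffices Filter.Tendsto id (Filter.comap
        (fun (u : UnitarySOT H) (n : ℕ) => L u (TopologicalSpace.denseSeq H n))
        (𝓝 fun n => L u (TopologicalSpace.denseSeq H n))) (𝓝 u) from this
    rw [tendsto_iff]
    intro x
    rw [Metric.tendsto_nhds]
    intro ε hε
    obtain ⟨n, hn⟩ := (TopologicalSpace.denseRange_denseSeq H).exists_dist_lt x
      (show 0 < ε / 3 by positivity)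
    have h1 := ((continuous_apply (A := fun _ => H) n).tendsto
      (fun n => L u (TopologicalSpace.denseSeq H n))).comp (Filter.tendsto_comap (f := 
        (fun (u : UnitarySOT H) (n : ℕ) => L u (TopologicalSpace.denseSeq H n))))
    have h2 := (Metric.tendsto_nhds.1 h1) (ε / 3) (by positivity)
    filter_upwards [h2] with v hv
    simp only [Function.comp_apply] at hv
    have a1 : dist (L v x) (L v (TopologicalSpace.denseSeq H n)) < ε / 3 := by
      rwa [LinearIsometryEquiv.dist_map]
    have a2 : dist (L u (TopologicalSpace.denseSeq H n)) (L u x) < ε / 3 := by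
      rwa [LinearIsometryEquiv.dist_map, dist_comm]
    have := dist_triangle4 (L v x) (L v (TopologicalSpace.denseSeq H n))
      (L u (TopologicalSpace.denseSeq H n)) (L u x)
    simp only [id]
    linarith

theorem lim_exists {U : ℕ → UnitarySOT H} {D : Set H} (hD : Dense D)
    (h : ∀ d ∈ D, ∃ a, Filter.Tendsto (fun n => L (U n) d) Filter.atTop (𝓝 a)) (x : H) :
    ∃ a, Filter.Tendsto (fun n => L (U n) x) Filter.atTop (𝓝 a) := by
  apply cauchySeq_tendsto_of_complete
  rw [Metric.cauchySeq_iff']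
  intro ε hε
  obtain ⟨d, hd, hxd⟩ := hD.exists_dist_lt x (show 0 < ε / 3 by positivity)
  obtain ⟨a, ha⟩ := h d hd
  obtain ⟨N, hN⟩ := Metric.cauchySeq_iff'.1 ha.cauchySeq (ε / 3) (by positivity)
  refine ⟨N, fun n hn => ?_⟩
  have a1 : dist (L (U n) x) (L (U n) d) < ε / 3 := by rwa [LinearIsometryEquiv.dist_map]
  have a2 : dist (L (U N) d) (L (U N) x) < ε / 3 := by
    rwa [LinearIsometryEquiv.dist_map, dist_comm]
  have := dist_triangle4 (L (U n) x) (L (U n) d) (L (U N) d) (L (U N) x)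
  have := hN n hn
  linarith

theorem lim_comp {U V : ℕ → UnitarySOT H} {A B : H → H}
    (hA : ∀ x, Filter.Tendsto (fun n => L (U n) x) Filter.atTop (𝓝 (A x)))
    (hB : ∀ x, Filter.Tendsto (fun n => L (V n) x) Filter.atTop (𝓝 (B x)))
    (hUV : ∀ n, U n * V n = 1) (x : H) : A (B x) = x := by
  have h3 : Filter.Tendsto (fun n => L (U n) (L (V n) x - B x)) Filter.atTop (𝓝 0) := by
    rw [tendsto_zero_iff_norm_tendsto_zero]
    simp only [LinearIsometryEquiv.norm_map]
    rw [← tendsto_zero_iff_norm_tendsto_zero]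
    simpa using (hB x).sub_const (B x)
  have h4 := h3.add (hA (B x))
  simp only [map_sub, sub_add_cancel, zero_add, ← L_mul, hUV, L_one] at h4
  exact tendsto_nhds_unique h4 tendsto_const_nhds

theorem lim_unitary {U : ℕ → UnitarySOT H} {D : Set H} (hD : Dense D)
    (h : ∀ d ∈ D, ∃ a, Filter.Tendsto (fun n => L (U n) d) Filter.atTop (𝓝 a))
    (h' : ∀ d ∈ D, ∃ a, Filter.Tendsto (fun n => L (U n)⁻¹ d) Filter.atTop (𝓝 a)) :
    ∃ u, Filter.Tendsto U Filter.atTop (𝓝 u) := by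
  choose A hA using lim_exists hD h
  choose B hB using lim_exists (U := fun n => (U n)⁻¹) hD h'
  let e : H ≃ₗ[ℂ] H :=
    { toFun := A
      invFun := B
      left_inv := lim_comp hB hA (by simp)
      right_inv := lim_comp hA hB (by simp)
      map_add' := fun x y => by
        refine tendsto_nhds_unique (hA (x + y)) ?_
        simpa using (hA x).add (hA y)
      map_smul' := fun c x => by
        refine tendsto_nhds_unique (hA (c • x)) ?_
        simpa using (hA x).const_smul c }
  let E : H ≃ₗᵢ[ℂ] H :=
    { toLinearEquiv := e
      norm_map' := fun x => by
        refine tendsto_nhds_unique (hA x).norm ?_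
        simp }
  refine ⟨L.symm E, tendsto_iff.2 fun x => ?_⟩
  rw [MulEquiv.apply_symm_apply]
  exact hA x

theorem polish [TopologicalSpace.SeparableSpace H] : PolishSpace (UnitarySOT H) := by
  let Φ : UnitarySOT H → (ℕ → H) × (ℕ → H) := fun u =>
    (fun n => L u (TopologicalSpace.denseSeq H n), fun n => L u⁻¹ (TopologicalSpace.denseSeq H n))
  have hcont : Continuous Φ :=
    (continuous_pi fun n => continuous_L _).prodMk
      (continuous_pi fun n => (continuous_L _).comp continuous_inv)
  have hind : IsInducing Φ :=
    IsInducing.of_comp hcont continuous_fst isInducing_dense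
  have hinj : Function.Injective Φ := by
    intro u v huv
    have h1 : ∀ n, L u (TopologicalSpace.denseSeq H n) = L v (TopologicalSpace.denseSeq H n) :=
      fun n => congrFun (congrArg Prod.fst huv) n
    refine L_ext fun x => ?_
    exact congrFun ((TopologicalSpace.denseRange_denseSeq H).equalizer (L u).continuous
      (L v).continuous (funext h1)) x
  have : T2Space (UnitarySOT H) := T2Space.of_injective_continuous hinj hcont
  refine IsClosedEmbedding.polishSpace (f := Φ) ⟨⟨hind, hinj⟩, ?_⟩
  apply IsSeqClosed.isClosed
  intro s p hs hp
  choose U hU using hs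
  have hp' : Filter.Tendsto (fun n => Φ (U n)) Filter.atTop (𝓝 p) := by
    simpa only [hU] using hp
  have hp1 := tendsto_pi_nhds.1 ((continuous_fst.tendsto p).comp hp')
  have hp2 := tendsto_pi_nhds.1 ((continuous_snd.tendsto p).comp hp')
  obtain ⟨u, hu⟩ := lim_unitary (U := U) (TopologicalSpace.denseRange_denseSeq H)
    (by rintro _ ⟨n, rfl⟩; exact ⟨_, hp1 n⟩) (by rintro _ ⟨n, rfl⟩; exact ⟨_, hp2 n⟩)
  exact ⟨u, tendsto_nhds_unique ((hcont.tendsto u).comp hu) hp'⟩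

set_option linter.unusedSectionVars false
section diag

open Module.End in
theorem exists_diag {E : Type*} [NormedAddCommGroup E] [InnerProductSpace ℂ E]
    [FiniteDimensional ℂ E] (T : E →ₗᵢ[ℂ] E) :
    ∃ (n : ℕ) (b : OrthonormalBasis (Fin n) ℂ E) (μ : Fin n → Circle),
      ∀ i, T (b i) = (μ i : ℂ) • b i := by
  classical
  let T' : Module.End ℂ E := T.toLinearMap
  have hnorm : ∀ μ x, x ∈ eigenspace T' μ → x ≠ 0 → ‖μ‖ = 1 := by
    intro μ x hx hx0
    have h1 : T x = μ • x := mem_eigenspace_iff.1 hx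
    have h2 := T.norm_map x
    rw [h1, norm_smul] at h2
    exact mul_right_cancel₀ (norm_ne_zero_iff.2 hx0) (by rw [h2, one_mul])
  have hss : T'.IsSemisimple := by
    rw [isSemisimple_iff]
    intro p hp
    refine ⟨pᗮ, ?_, Submodule.isCompl_orthogonal p⟩
    have hpm : p.map T' = p := by
      apply Submodule.eq_of_le_of_finrank_le
      · exact Submodule.map_le_iff_le_comap.2 hp
      · exact (LinearEquiv.finrank_eq (Submodule.equivMapOfInjective T' T.injective p)).le
    intro x hx
    rw [Submodule.mem_comap, Submodule.mem_orthogonal]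
    intro y hy
    rw [← hpm] at hy
    obtain ⟨z, hz, rfl⟩ := hy
    exact (T.inner_map_map z x).trans ((Submodule.mem_orthogonal _ _).1 hx z hz)
  have htop : ⨆ μ, eigenspace T' μ = ⊤ := by
    have := iSup_maxGenEigenspace_eq_top T'
    simpa only [hss.isFinitelySemisimple.maxGenEigenspace_eq_eigenspace] using this
  have hort : OrthogonalFamily ℂ (fun μ : Eigenvalues T' => eigenspace T' (μ : ℂ))
      fun μ => (eigenspace T' (μ : ℂ)).subtypeₗᵢ := by
    apply OrthogonalFamily.of_pairwise
    intro μ ν hμν x hx y hy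
    refine inner_eq_zero_symm.1 ?_
    by_cases hx0 : x = 0
    · simp [hx0]
    have hμ := hnorm _ x hx hx0
    have h1 : T x = (μ : ℂ) • x := mem_eigenspace_iff.1 hx
    have h2 : T y = (ν : ℂ) • y := mem_eigenspace_iff.1 hy
    have h3 := T.inner_map_map x y
    rw [h1, h2, inner_smul_left, inner_smul_right] at h3
    by_contra hne
    have h4 : (starRingEnd ℂ) (μ : ℂ) * (ν : ℂ) = 1 :=
      mul_right_cancel₀ hne (by rw [one_mul, mul_assoc]; exact h3)
    have h5 : (starRingEnd ℂ) (μ : ℂ) * (μ : ℂ) = 1 := by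
      rw [Complex.conj_mul', hμ]; simp
    have h6 : (starRingEnd ℂ) (μ : ℂ) ≠ 0 := by
      intro h; rw [h, zero_mul] at h5; exact zero_ne_one h5
    exact hμν (Subtype.ext (mul_left_cancel₀ h6 (h5.trans h4.symm)))
  have hint : DirectSum.IsInternal fun μ : Eigenvalues T' => eigenspace T' (μ : ℂ) := by
    rw [hort.isInternal_iff]
    rw [Submodule.orthogonal_eq_bot_iff]
    change ⨆ μ : { μ // (eigenspace T' μ) ≠ ⊥ }, eigenspace T' μ = ⊤
    rw [iSup_ne_bot_subtype, htop]
  let b := hint.subordinateOrthonormalBasis rfl hort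
  have hb : ∀ i, b i ∈ eigenspace T' ((hint.subordinateOrthonormalBasisIndex rfl i hort : Eigenvalues T') : ℂ) :=
    fun i => hint.subordinateOrthonormalBasis_subordinate rfl i hort
  refine ⟨_, b, fun i => ⟨((hint.subordinateOrthonormalBasisIndex rfl i hort : Eigenvalues T') : ℂ), ?_⟩, ?_⟩
  · exact mem_sphere_zero_iff_norm.2 (hnorm _ _ (hb i) (b.orthonormal.ne_zero i))
  · intro i
    exact mem_eigenspace_iff.1 (hb i)

end diag

variable {n : ℕ}

noncomputable def dg (f : Fin n → H) (μ : Fin n → Circle) : H →ₗ[ℂ] H where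
  toFun x := x + ∑ j, (((μ j : ℂ) - 1) * inner ℂ (f j) x) • f j
  map_add' x y := by
    simp only [inner_add_right, mul_add, add_smul, Finset.sum_add_distrib]; abel
  map_smul' c x := by
    simp only [inner_smul_right, smul_add, Finset.smul_sum, smul_smul, RingHom.id_apply]
    congr 2
    ext j
    congr 1
    ring

theorem dg_apply (f : Fin n → H) (μ : Fin n → Circle) (x : H) :
    dg f μ x = x + ∑ j, (((μ j : ℂ) - 1) * inner ℂ (f j) x) • f j := rfl

theorem inner_dg {f : Fin n → H} (hf : Orthonormal ℂ f) (μ : Fin n → Circle) (x : H) (i : Fin n) :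
    inner ℂ (f i) (dg f μ x) = μ i * inner ℂ (f i) x := by
  rw [dg_apply, inner_add_right, hf.inner_right_fintype]
  ring

theorem dg_mul {f : Fin n → H} (hf : Orthonormal ℂ f) (μ ν : Fin n → Circle) (x : H) :
    dg f (μ * ν) x = dg f μ (dg f ν x) := by
  rw [dg_apply, dg_apply f μ]
  simp only [inner_dg hf]
  rw [dg_apply, add_assoc, ← Finset.sum_add_distrib]
  congr 2
  ext j
  rw [← add_smul]
  congr 1
  simp only [Pi.mul_apply, Circle.coe_mul]
  ring

theorem dg_one (f : Fin n → H) (x : H) : dg f 1 x = x := by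
  simp [dg_apply]

theorem inner_dg_dg {f : Fin n → H} (hf : Orthonormal ℂ f) (μ : Fin n → Circle) (x : H) :
    inner ℂ (dg f μ x) (dg f μ x) = inner ℂ x x := by
  have key : ∀ y, inner ℂ (dg f μ x) y = inner ℂ x y +
      ∑ j, (starRingEnd ℂ) (((μ j : ℂ) - 1) * inner ℂ (f j) x) * inner ℂ (f j) y := by
    intro y
    rw [dg_apply, inner_add_left, sum_inner]
    simp only [inner_smul_left]
  rw [key]
  simp only [inner_dg hf]
  rw [dg_apply, inner_add_right, inner_sum]
  simp only [inner_smul_right]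
  rw [add_assoc, ← Finset.sum_add_distrib]
  convert add_zero _
  apply Finset.sum_eq_zero
  intro j _
  have h : (starRingEnd ℂ) (μ j : ℂ) * (μ j : ℂ) = 1 := by
    rw [Complex.conj_mul', Circle.norm_coe]; simp
  rw [← inner_conj_symm x (f j)]
  simp only [map_mul, map_sub, map_one]
  linear_combination (inner ℂ (f j) x * (starRingEnd ℂ) (inner ℂ (f j) x)) * h

noncomputable def dgU {f : Fin n → H} (hf : Orthonormal ℂ f) :
    (Fin n → Circle) →* UnitarySOT H where
  toFun μ := L.symm
    { toLinearEquiv := LinearEquiv.ofLinearMap (dg f μ) (dg f μ⁻¹)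
        (LinearMap.ext fun x => by simp [← dg_mul hf, dg_one])
        (LinearMap.ext fun x => by simp [← dg_mul hf, dg_one])
      norm_map' := fun x => by
        have := inner_dg_dg hf μ x
        rw [inner_self_eq_norm_sq_to_K, inner_self_eq_norm_sq_to_K] at this
        have h2 : ‖dg f μ x‖ ^ 2 = ‖x‖ ^ 2 := by exact_mod_cast this
        exact (sq_eq_sq₀ (norm_nonneg _) (norm_nonneg _)).1 h2 }
  map_one' := by
    apply L_ext; intro x
    rw [MulEquiv.apply_symm_apply, L_one]
    exact dg_one f x
  map_mul' μ ν := by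
    apply L_ext; intro x
    rw [L_mul]
    simp only [MulEquiv.apply_symm_apply]
    exact dg_mul hf μ ν x

theorem L_dgU {f : Fin n → H} (hf : Orthonormal ℂ f) (μ : Fin n → Circle) (x : H) :
    L (dgU hf μ) x = dg f μ x := by
  simp only [dgU, MonoidHom.coe_mk, OneHom.coe_mk, MulEquiv.apply_symm_apply]
  rfl

theorem dg_f {f : Fin n → H} (hf : Orthonormal ℂ f) (μ : Fin n → Circle) (i : Fin n) :
    dg f μ (f i) = (μ i : ℂ) • f i := by
  classical
  rw [dg_apply, Finset.sum_eq_single i]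
  · rw [inner_self_eq_norm_sq_to_K, hf.1 i]; simp [sub_smul]
  · intro j _ hj
    rw [hf.2 hj]; simp
  · simp

theorem continuous_dgU {f : Fin n → H} (hf : Orthonormal ℂ f) : Continuous (dgU hf) := by
  rw [isInducing_L.continuous_iff, continuous_pi_iff]
  intro x
  simp only [Function.comp_def, L_dgU, dg_apply]
  fun_prop

theorem mem_span_eq {f : Fin n → H} (hf : Orthonormal ℂ f) {x : H}
    (hx : x ∈ Submodule.span ℂ (Set.range f)) : ∑ j, (inner ℂ (f j) x) • f j = x := by
  obtain ⟨c, rfl⟩ := (Submodule.mem_span_range_iff_exists_fun ℂ).1 hx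
  simp only [hf.inner_right_fintype]

theorem norm_dg_sub {f : Fin n → H} (hf : Orthonormal ℂ f) (μ : Fin n → Circle) (c : ℂ) {x : H}
    (hx : x ∈ Submodule.span ℂ (Set.range f)) :
    ‖dg f μ x - c • x‖ ^ 2 = ∑ j, ‖(μ j : ℂ) - c‖ ^ 2 * ‖inner ℂ (f j) x‖ ^ 2 := by
  have h1 : dg f μ x - c • x = ∑ j, (((μ j : ℂ) - c) * inner ℂ (f j) x) • f j := by
    rw [dg_apply]
    conv_lhs => rw [show x + ∑ j, (((μ j : ℂ) - 1) * inner ℂ (f j) x) • f j - c • x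
      = (1 - c) • x + ∑ j, (((μ j : ℂ) - 1) * inner ℂ (f j) x) • f j by module]
    conv_lhs => enter [1, 2]; rw [← mem_span_eq hf hx]
    rw [Finset.smul_sum, ← Finset.sum_add_distrib]
    congr 1; ext j
    module
  have h2 : inner ℂ (dg f μ x - c • x) (dg f μ x - c • x) =
      ((∑ j, ‖(μ j : ℂ) - c‖ ^ 2 * ‖inner ℂ (f j) x‖ ^ 2 : ℝ) : ℂ) := by
    rw [h1, hf.inner_sum]
    push_cast
    congr 1; ext j
    rw [Complex.conj_mul', norm_mul]
    push_cast
    ring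
  rw [inner_self_eq_norm_sq_to_K] at h2
  exact Complex.ofReal_injective (by rw [← h2]; push_cast; rfl)

theorem exists_dgU (w : UnitarySOT H) (X : Finset H) :
    ∃ (n : ℕ) (f : Fin n → H) (hf : Orthonormal ℂ f) (μ : Fin n → Circle),
      (∀ x ∈ X, x ∈ Submodule.span ℂ (Set.range f)) ∧ ∀ x ∈ X, L (dgU hf μ) x = L w x := by
  classical
  let E : Submodule ℂ H := Submodule.span ℂ ((X ∪ X.image (L w) : Finset H) : Set H)
  have : FiniteDimensional ℂ E := FiniteDimensional.span_finset ℂ _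
  have hXE : ∀ x ∈ X, x ∈ E := fun x hx => Submodule.subset_span (by simp [hx])
  have hwE : ∀ x ∈ X, L w x ∈ E := fun x hx => Submodule.subset_span
    (by rw [Finset.mem_coe]; exact Finset.mem_union_right _ (Finset.mem_image_of_mem _ hx))
  let S : Submodule ℂ E := Submodule.span ℂ (Subtype.val ⁻¹' (X : Set H))
  have hS : ∀ s ∈ S, L w (s : H) ∈ E := by
    intro s hs
    induction hs using Submodule.span_induction with
    | mem x hx => exact hwE _ hx
    | zero => simp
    | add x y _ _ h1 h2 =>
      rw [Submodule.coe_add, map_add]; exact E.add_mem h1 h2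
    | smul c x _ h =>
      rw [Submodule.coe_smul, map_smul]; exact E.smul_mem c h
  let T0 : S →ₗᵢ[ℂ] E :=
    { toFun := fun s => ⟨L w ((s : E) : H), hS s s.2⟩
      map_add' := fun x y => by ext; simp
      map_smul' := fun c x => by ext; simp
      norm_map' := fun x => by
        change ‖L w ((x : E) : H)‖ = ‖((x : E) : H)‖
        simp }
  obtain ⟨n, b, μ, hb⟩ := exists_diag T0.extend
  have hf : Orthonormal ℂ (fun i => (b i : H)) := b.orthonormal.comp_linearIsometry E.subtypeₗᵢ
  have hdg : ∀ y : E, dg (fun i => (b i : H)) μ (y : H) = (T0.extend y : H) := by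
    have : (dg (fun i => (b i : H)) μ) ∘ₗ E.subtype = E.subtype ∘ₗ T0.extend.toLinearMap := by
      apply b.toBasis.ext
      intro i
      simp only [OrthonormalBasis.coe_toBasis, LinearMap.comp_apply, Submodule.subtype_apply,
        LinearIsometry.coe_toLinearMap, hb]
      exact dg_f hf μ i
    exact fun y => LinearMap.congr_fun this y
  refine ⟨n, fun i => (b i : H), hf, μ, ?_, ?_⟩
  · intro x hx
    rw [Submodule.mem_span_range_iff_exists_fun]
    refine ⟨fun i => inner ℂ (b i) (⟨x, hXE x hx⟩ : E), ?_⟩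
    have := congrArg (Subtype.val) (b.sum_repr' (⟨x, hXE x hx⟩ : E))
    simpa using this
  · intro x hx
    have hxS : (⟨x, hXE x hx⟩ : E) ∈ S := Submodule.subset_span hx
    rw [L_dgU, hdg ⟨x, hXE x hx⟩]
    have := T0.extend_apply ⟨⟨x, hXE x hx⟩, hxS⟩
    exact congrArg Subtype.val this

theorem exists_dgU_mem {O : Set (UnitarySOT H)} (hO : IsOpen O) (hne : O.Nonempty)
    (X : Finset H) :
    ∃ (n : ℕ) (f : Fin n → H) (hf : Orthonormal ℂ f) (μ : Fin n → Circle),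
      (∀ x ∈ X, x ∈ Submodule.span ℂ (Set.range f)) ∧ dgU hf μ ∈ O := by
  classical
  obtain ⟨w, hw⟩ := hne
  obtain ⟨Y, ε, hε, hY⟩ := exists_nhds (hO.mem_nhds hw)
  obtain ⟨n, f, hf, μ, h1, h2⟩ := exists_dgU w (X ∪ Y)
  refine ⟨n, f, hf, μ, fun x hx => h1 x (Finset.mem_union_left _ hx), hY _ fun x hx => ?_⟩
  rw [h2 x (Finset.mem_union_right _ hx)]
  simpa using hε

theorem recur {O V : Set (UnitarySOT H)} (hO : IsOpen O) (hne : O.Nonempty)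
    (hV : V ∈ 𝓝 (1 : UnitarySOT H)) : ∃ u ∈ O, ∃ k : ℕ, 0 < k ∧ u ^ k ∈ V := by
  obtain ⟨n, f, hf, μ, -, h⟩ := exists_dgU_mem hO hne ∅
  have h1 := mapClusterPt_one_atTop_pow μ
  have h2 : dgU hf ⁻¹' V ∈ 𝓝 (1 : Fin n → Circle) := by
    apply (continuous_dgU hf).continuousAt
    rwa [map_one]
  have h3 := h1.frequently h2
  obtain ⟨k, hk, hk0⟩ := (h3.and_eventually (Filter.eventually_gt_atTop 0)).exists
  exact ⟨_, h, k, hk0, by simpa using hk⟩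

theorem root_one (k : ℕ) (hk : 0 < k) (l z : Circle) :
    ∃ r : Circle, r ^ k = z ∧ ‖(r : ℂ) - l‖ ≤ 2 * ‖(z : ℂ) - (l : ℂ) ^ k‖ := by
  set θ : ℝ := Complex.arg ((z / l ^ k : Circle) : ℂ) with hθ
  have hk' : (k : ℝ) ≠ 0 := by positivity
  have hexp : Circle.exp θ = z / l ^ k := Circle.exp_arg _
  refine ⟨l * Circle.exp (θ / k), ?_, ?_⟩
  · rw [mul_pow, ← Circle.exp_nsmul, nsmul_eq_mul, mul_div_cancel₀ _ hk', hexp, mul_div_cancel]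
  · have h1 : ‖((l * Circle.exp (θ / k) : Circle) : ℂ) - l‖ ≤ |θ / k| := by
      rw [Circle.coe_mul, Circle.coe_exp]
      rw [show (l : ℂ) * Complex.exp (((θ / k : ℝ) : ℂ) * Complex.I) - l
        = l * (Complex.exp (Complex.I * ((θ / k : ℝ) : ℂ)) - 1) by rw [mul_comm Complex.I]; ring]
      rw [norm_mul, Circle.norm_coe, one_mul]
      exact Real.norm_exp_I_mul_ofReal_sub_one_le
    have h2 : |θ / k| ≤ |θ| := by
      rw [abs_div]
      apply div_le_self (abs_nonneg _)
      rw [Nat.abs_cast]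
      exact_mod_cast hk
    have h3 : |θ| ≤ Real.pi / 2 * ‖(z : ℂ) - (l : ℂ) ^ k‖ := by
      have := Complex.angle_le_mul_norm_sub (x := (z : ℂ)) (y := (l : ℂ) ^ k)
        (Circle.norm_coe z) (by rw [norm_pow, Circle.norm_coe, one_pow])
      rw [Complex.angle_eq_abs_arg (by simp) (by simp)] at this
      simpa [hθ] using this
    have h4 : Real.pi / 2 * ‖(z : ℂ) - (l : ℂ) ^ k‖ ≤ 2 * ‖(z : ℂ) - (l : ℂ) ^ k‖ := by
      gcongr
      linarith [Real.pi_le_four]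
    linarith

theorem root_many (k : ℕ) (hk : 0 < k) (l : Fin n → Circle)
    (hl : ∀ i j, l i ^ k = l j ^ k → l i = l j) :
    ∃ C : ℝ, 0 < C ∧ ∀ z : Circle, ∃ r : Circle, r ^ k = z ∧
      ∀ i, ‖(r : ℂ) - l i‖ ≤ C * ‖(z : ℂ) - (l i : ℂ) ^ k‖ := by
  rcases Nat.eq_zero_or_pos n with rfl | hn
  · refine ⟨1, one_pos, fun z => ?_⟩
    obtain ⟨r, hr, -⟩ := root_one k hk 1 z
    exact ⟨r, hr, fun i => i.elim0⟩
  have : Nonempty (Fin n) := ⟨⟨0, hn⟩⟩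
  have hpair : ∀ p : Fin n × Fin n, ∃ C : ℝ, 0 < C ∧
      (l p.1 ≠ l p.2 → 4 ≤ C * ‖(l p.1 : ℂ) ^ k - (l p.2 : ℂ) ^ k‖) := by
    intro p
    by_cases h : l p.1 = l p.2
    · exact ⟨1, one_pos, fun h' => absurd h h'⟩
    · have hne : (l p.1 : ℂ) ^ k - (l p.2 : ℂ) ^ k ≠ 0 := by
        intro h0
        apply h
        apply hl
        ext
        simpa [sub_eq_zero] using h0
      have hpos := norm_pos_iff.2 hne
      refine ⟨4 / ‖(l p.1 : ℂ) ^ k - (l p.2 : ℂ) ^ k‖, by positivity, fun _ => ?_⟩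
      rw [div_mul_cancel₀ _ hpos.ne']
  choose c hc0 hc using hpair
  have hsum : ∀ p, c p ≤ ∑ q, c q := fun p =>
    Finset.single_le_sum (fun q _ => (hc0 q).le) (Finset.mem_univ p)
  have hs0 : 0 ≤ ∑ q, c q := Finset.sum_nonneg fun q _ => (hc0 q).le
  refine ⟨2 + ∑ q, c q, by positivity, fun z => ?_⟩
  obtain ⟨i0, hi0⟩ := Finite.exists_min (fun i => ‖(z : ℂ) - (l i : ℂ) ^ k‖)
  obtain ⟨r, hr, hr2⟩ := root_one k hk (l i0) z
  refine ⟨r, hr, fun i => ?_⟩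
  have hz := norm_nonneg ((z : ℂ) - (l i : ℂ) ^ k)
  by_cases h : l i0 = l i
  · rw [h] at hr2
    nlinarith [mul_nonneg hs0 hz]
  · have h1 := hc (i0, i) h
    simp only at h1
    have h2 : ‖(l i0 : ℂ) ^ k - (l i : ℂ) ^ k‖ ≤ 2 * ‖(z : ℂ) - (l i : ℂ) ^ k‖ := by
      have h3 : (l i0 : ℂ) ^ k - (l i : ℂ) ^ k =
        ((z : ℂ) - (l i : ℂ) ^ k) - ((z : ℂ) - (l i0 : ℂ) ^ k) := by ring
      rw [h3]
      refine (norm_sub_le _ _).trans ?_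
      linarith [hi0 i]
    have h4 : ‖(r : ℂ) - l i‖ ≤ 2 := by
      refine (norm_sub_le _ _).trans ?_
      simp only [Circle.norm_coe]; norm_num
    have h5 : c (i0, i) * ‖(l i0 : ℂ) ^ k - (l i : ℂ) ^ k‖ ≤
        (∑ q, c q) * (2 * ‖(z : ℂ) - (l i : ℂ) ^ k‖) :=
      mul_le_mul (hsum _) h2 (norm_nonneg _) hs0
    nlinarith

theorem dense_good (k : ℕ) (hk : 0 < k) :
    Dense {l : Fin n → Circle | ∀ i j, l i ^ k = l j ^ k → l i = l j} := by
  have h1 : DenseRange (fun q : ℚ => Circle.exp (q : ℝ)) :=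
    DenseRange.comp (g := Circle.exp) (f := fun q : ℚ => (q : ℝ))
      (Function.Surjective.denseRange fun z => ⟨_, Circle.exp_arg z⟩)
      Rat.denseRange_cast Circle.exp.continuous
  have h2 := dense_pi (s := fun _ : Fin n => Set.range (fun q : ℚ => Circle.exp (q : ℝ)))
    Set.univ (fun i _ => h1)
  refine h2.mono ?_
  intro l hl i j hij
  obtain ⟨p, hp⟩ := hl i trivial
  obtain ⟨q, hq⟩ := hl j trivial
  simp only at hp hq
  rw [← hp, ← hq, ← Circle.exp_nsmul, ← Circle.exp_nsmul, Circle.exp_eq_exp] at hij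
  obtain ⟨m, hm⟩ := hij
  rw [← hp, ← hq]
  by_cases hm0 : m = 0
  · subst hm0
    have hk' : (k : ℝ) ≠ 0 := by positivity
    simp only [nsmul_eq_mul, Int.cast_zero, zero_mul, add_zero] at hm
    rw [mul_left_cancel₀ hk' hm]
  · exfalso
    apply irrational_pi
    refine ⟨(k * (p - q)) / (2 * m), ?_⟩
    have hm' : (m : ℝ) ≠ 0 := by exact_mod_cast hm0
    simp only [nsmul_eq_mul] at hm
    push_cast
    field_simp
    linarith

theorem span_bound {f : Fin n → H} {x : H} (hx : x ∈ Submodule.span ℂ (Set.range f)) :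
    ∃ C : ℝ, 0 ≤ C ∧ ∀ (u v : UnitarySOT H) (δ : ℝ), (∀ i, ‖L u (f i) - L v (f i)‖ ≤ δ) →
      ‖L u x - L v x‖ ≤ C * δ := by
  induction hx using Submodule.span_induction with
  | mem x hx =>
    obtain ⟨i, rfl⟩ := hx
    exact ⟨1, zero_le_one, fun u v δ h => by simpa using h i⟩
  | zero => exact ⟨0, le_rfl, fun u v δ h => by simp⟩
  | add x y _ _ h1 h2 =>
    obtain ⟨C, hC, h1⟩ := h1
    obtain ⟨D, hD, h2⟩ := h2
    refine ⟨C + D, add_nonneg hC hD, fun u v δ h => ?_⟩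
    rw [map_add, map_add, add_sub_add_comm, add_mul]
    exact (norm_add_le _ _).trans (add_le_add (h1 u v δ h) (h2 u v δ h))
  | smul c x _ h1 =>
    obtain ⟨C, hC, h1⟩ := h1
    refine ⟨‖c‖ * C, by positivity, fun u v δ h => ?_⟩
    rw [map_smul, map_smul, ← smul_sub, norm_smul, mul_assoc]
    exact mul_le_mul_of_nonneg_left (h1 u v δ h) (norm_nonneg _)

theorem span_nhds {f : Fin n → H} {X : Finset H}
    (hX : ∀ x ∈ X, x ∈ Submodule.span ℂ (Set.range f)) {ε : ℝ} (hε : 0 < ε) :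
    ∃ δ > 0, ∀ (u v : UnitarySOT H), (∀ i, ‖L u (f i) - L v (f i)‖ ≤ δ) →
      ∀ x ∈ X, ‖L u x - L v x‖ < ε := by
  choose! C hC0 hC using fun x (hx : x ∈ X) => span_bound (hX x hx)
  have hs0 : 0 ≤ ∑ x ∈ X, C x := Finset.sum_nonneg hC0
  refine ⟨ε / (1 + ∑ x ∈ X, C x), by positivity, fun u v h x hx => ?_⟩
  refine (hC x hx u v _ h).trans_lt ?_
  have h1 : C x ≤ ∑ x ∈ X, C x := Finset.single_le_sum hC0 hx
  rw [← mul_div_assoc, div_lt_iff₀ (by positivity)]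
  nlinarith

theorem dense_pow {G : Set (UnitarySOT H)} (hG : IsOpen G) (hd : Dense G) (k : ℕ) (hk : 0 < k) :
    Dense ((fun u : UnitarySOT H => u ^ k) ⁻¹' G) := by
  classical
  rw [dense_iff_inter_open]
  rintro O hO ⟨w0, hw0⟩
  obtain ⟨X, ε, hε, hX⟩ := exists_nhds (hO.mem_nhds hw0)
  obtain ⟨n, f, hf, μ, hspan, hμ⟩ := exists_dgU w0 X
  let O1 : Set (UnitarySOT H) := {v | ∀ x ∈ X, ‖L v x - L w0 x‖ < ε / 2}
  have hO1 : IsOpen O1 := by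
    have : O1 = ⋂ x ∈ X, {v | ‖L v x - L w0 x‖ < ε / 2} := by ext v; simp [O1]
    rw [this]
    exact isOpen_biInter_finset fun x _ =>
      isOpen_lt ((continuous_L x).sub continuous_const).norm continuous_const
  have hμO : dgU hf μ ∈ O1 := fun x hx => by rw [hμ x hx]; simpa using hε
  obtain ⟨l, hlO, hl⟩ := (dense_good (n := n) k hk).inter_open_nonempty _
    (hO1.preimage (continuous_dgU hf)) ⟨μ, hμO⟩
  obtain ⟨δ, hδ, hδX⟩ := span_nhds hspan (half_pos hε)
  obtain ⟨C, hC, hroot⟩ := root_many k hk l hl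
  let V : Set (UnitarySOT H) := {v | ∀ i, ‖L v (f i) - ((l i : ℂ) ^ k) • f i‖ < δ / C}
  have hV : IsOpen V := by
    have : V = ⋂ i, {v | ‖L v (f i) - ((l i : ℂ) ^ k) • f i‖ < δ / C} := by ext v; simp [V]
    rw [this]
    exact isOpen_iInter_of_finite fun i =>
      isOpen_lt ((continuous_L _).sub continuous_const).norm continuous_const
  have hVne : dgU hf (l ^ k) ∈ V := fun i => by
    rw [L_dgU, dg_f hf, Pi.pow_apply, Circle.coe_pow, sub_self, norm_zero]
    positivity
  obtain ⟨m, g, hg, ν, hspang, hνV, hνG⟩ := exists_dgU_mem (hV.inter hG)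
    (hd.inter_open_nonempty V hV ⟨_, hVne⟩) (Finset.univ.image f)
  choose ρ hρ hρ2 using fun j => hroot (ν j)
  refine ⟨dgU hg ρ, ?_, ?_⟩
  · apply hX
    have hclose : ∀ i, ‖L (dgU hg ρ) (f i) - L (dgU hf l) (f i)‖ ≤ δ := by
      intro i
      have hfi := hspang (f i) (Finset.mem_image_of_mem _ (Finset.mem_univ i))
      have h1 := hνV i
      rw [L_dgU] at h1
      rw [L_dgU, L_dgU, dg_f hf]
      have h2 : ‖dg g ρ (f i) - (l i : ℂ) • f i‖ ^ 2 ≤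
          (C * ‖dg g ν (f i) - ((l i : ℂ) ^ k) • f i‖) ^ 2 := by
        rw [mul_pow, norm_dg_sub hg ρ _ hfi, norm_dg_sub hg ν _ hfi, Finset.mul_sum]
        apply Finset.sum_le_sum
        intro j _
        rw [← mul_assoc, ← mul_pow C]
        exact mul_le_mul_of_nonneg_right
          (pow_le_pow_left₀ (norm_nonneg _) (hρ2 j i) 2) (sq_nonneg _)
      have h3 := (sq_le_sq₀ (norm_nonneg _) (by positivity)).1 h2
      refine h3.trans ?_
      rw [lt_div_iff₀ hC] at h1
      linarith
    intro x hx
    have h1 := hδX _ _ hclose x hx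
    have h2 := hlO x hx
    have h3 := norm_sub_le_norm_sub_add_norm_sub (L (dgU hg ρ) x) (L (dgU hf l) x) (L w0 x)
    linarith
  · change dgU hg ρ ^ k ∈ G
    rw [← map_pow]
    rwa [show ρ ^ k = ν from funext hρ]

theorem dense_zpow {G : Set (UnitarySOT H)} (hG : IsOpen G) (hd : Dense G) (k : ℤ) (hk : k ≠ 0) :
    Dense ((fun u : UnitarySOT H => u ^ k) ⁻¹' G) := by
  obtain ⟨m, rfl | rfl⟩ := k.eq_nat_or_neg
  · simpa using dense_pow hG hd m (by omega)
  · have h := dense_pow (G := Inv.inv ⁻¹' G) (hG.preimage continuous_inv)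
      (hd.preimage (Homeomorph.inv (UnitarySOT H)).isOpenMap) m (by omega)
    refine h.mono fun u hu => ?_
    simpa using hu

theorem forward [TopologicalSpace.SeparableSpace H] {G : Set (UnitarySOT H)}
    (hG : G ∈ residual (UnitarySOT H)) :
      {u : UnitarySOT H |
          (Subtype.val ⁻¹' G :
              Set (closure ((Subgroup.zpowers u : Subgroup (UnitarySOT H)) : Set (UnitarySOT H)))) ∈
            residual (closure ((Subgroup.zpowers u : Subgroup (UnitarySOT H)) : Set (UnitarySOT H)))} ∈
        residual (UnitarySOT H) := by
  have := polish (H := H)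
  obtain ⟨S, hSo, hSd, hSc, hSG⟩ := mem_residual_iff.1 hG
  have h1 : ∀ᶠ u in residual (UnitarySOT H), ∀ t ∈ S, ∀ k : ℤ, k ≠ 0 → u ^ k ∈ t := by
    rw [eventually_countable_ball hSc]
    intro t ht
    rw [eventually_countable_forall]
    intro k
    by_cases hk : k = 0
    · simp [hk]
    · filter_upwards [residual_of_dense_open ((hSo t ht).preimage (continuous_zpow k))
        (dense_zpow (hSo t ht) (hSd t ht) k hk)] with u hu _ using hu
  obtain ⟨B, hB⟩ := (𝓝 (1 : UnitarySOT H)).exists_antitone_basis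
  have h2 : ∀ᶠ u in residual (UnitarySOT H), ∀ i, ∃ k : ℕ, 0 < k ∧ u ^ k ∈ interior (B i) := by
    rw [eventually_countable_forall]
    intro i
    apply residual_of_dense_open
    · have : {u : UnitarySOT H | ∃ k : ℕ, 0 < k ∧ u ^ k ∈ interior (B i)} =
        ⋃ k : ℕ, ⋃ _ : 0 < k, (fun u => u ^ k) ⁻¹' interior (B i) := by ext; simp
      exact this ▸ isOpen_iUnion fun k => isOpen_iUnion fun _ =>
        isOpen_interior.preimage (continuous_pow k)
    · rw [dense_iff_inter_open]
      intro O hO hne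
      obtain ⟨u, hu, k, hk, h⟩ := recur hO hne (interior_mem_nhds.2 (hB.1.mem_of_mem (i := i) trivial))
      exact ⟨u, hu, k, hk, h⟩
  filter_upwards [h1, h2] with u hu1 hu2
  have key : ∀ W : Set (UnitarySOT H), IsOpen W → ∀ k : ℤ, u ^ k ∈ W → ∃ j : ℤ, j ≠ 0 ∧ u ^ j ∈ W := by
    intro W hW k hk
    by_cases hk0 : k = 0
    · subst hk0
      rw [zpow_zero] at hk
      obtain ⟨i, -, hi⟩ := hB.1.mem_iff.1 (hW.mem_nhds hk)
      obtain ⟨j, hj, hj2⟩ := hu2 i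
      exact ⟨j, by exact_mod_cast hj.ne', by simpa using hi (interior_subset hj2)⟩
    · exact ⟨k, hk0, hk⟩
  refine Filter.mem_of_superset ?_ (Set.preimage_mono hSG)
  rw [Set.sInter_eq_biInter, Set.preimage_iInter₂, countable_bInter_mem hSc]
  intro t ht
  apply residual_of_dense_open ((hSo t ht).preimage continuous_subtype_val)
  rw [dense_iff_inter_open]
  rintro O hO ⟨⟨y, hy⟩, hyO⟩
  obtain ⟨W, hW, rfl⟩ := isOpen_induced_iff.1 hO
  obtain ⟨_, hxW, k, rfl⟩ := mem_closure_iff.1 hy W hW hyO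
  obtain ⟨j, hj0, hj⟩ := key W hW k hxW
  exact ⟨⟨u ^ j, subset_closure ⟨j, rfl⟩⟩, hj, hu1 t ht j hj0⟩

end USOT

/-- Let `H` be a separable infinite-dimensional complex Hilbert space and `U(H)` its unitary
group with the strong operator topology, and let `G ⊆ U(H)` have the Baire property. Then `G`
is comeager in `U(H)` iff for comeagerly many `u ∈ U(H)` the set `G ∩ cl(⟨u⟩)` is comeager
in `cl(⟨u⟩)` (the closure of the cyclic group generated by `u`, with the subspace topology). -/
theorem statement13 (H : Type*) [NormedAddCommGroup H] [InnerProductSpace ℂ H]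
    [CompleteSpace H] [TopologicalSpace.SeparableSpace H]
    (hinf : ¬ FiniteDimensional ℂ H)
    (G : Set (UnitarySOT H)) (hG : BaireMeasurableSet G) :
    G ∈ residual (UnitarySOT H) ↔
      {u : UnitarySOT H |
          (Subtype.val ⁻¹' G :
              Set (closure ((Subgroup.zpowers u : Subgroup (UnitarySOT H)) : Set (UnitarySOT H)))) ∈
            residual (closure ((Subgroup.zpowers u : Subgroup (UnitarySOT H)) : Set (UnitarySOT H)))} ∈
        residual (UnitarySOT H) := by
  refine ⟨USOT.forward, fun hcon => ?_⟩
  have := USOT.polish (H := H)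
  obtain ⟨O, hO, hGO⟩ := hG.compl.residualEq_isOpen
  have hne : ¬ O.Nonempty := by
    intro hne
    have h1 : Gᶜ ∪ Oᶜ ∈ residual (UnitarySOT H) := by
      filter_upwards [hGO.mem_iff] with x hx
      by_cases hxO : x ∈ O
      · exact Or.inl (hx.2 hxO)
      · exact Or.inr hxO
    have h2 := dense_of_mem_residual (Filter.inter_mem hcon (USOT.forward h1))
    obtain ⟨u, huO, hu1, hu2⟩ := h2.inter_open_nonempty O hO hne
    rw [Set.mem_ofPred_eq] at hu1 hu2
    have : PolishSpace (closure ((Subgroup.zpowers u : Subgroup (UnitarySOT H)) :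
      Set (UnitarySOT H))) := isClosed_closure.polishSpace
    have h3 := dense_of_mem_residual (Filter.inter_mem hu1 hu2)
    obtain ⟨y, hyO, hy1, hy2⟩ := h3.inter_open_nonempty (Subtype.val ⁻¹' O)
      (hO.preimage continuous_subtype_val)
      ⟨⟨u, subset_closure (Subgroup.mem_zpowers u)⟩, huO⟩
    rcases hy2 with h | h
    · exact h hy1
    · exact h hyO
  rw [Set.not_nonempty_iff_eq_empty] at hne
  subst hne
  filter_upwards [hGO.mem_iff] with x hx
  by_contra h
  exact hx.1 h
end
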